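/- arXiv:2108.02857 — 3 statements merged into one kernel-verified Lean document; each statement's English description precedes it below -/
import Mathlib

section
/- Let (Δₙ)_{n≥1} be a sequence of positive meshes with Δₙ → 0 and nΔₙ → ∞ as n → ∞. For every θ > 0 there exist a constant c(θ) > 0 and n₀ ∈ ℕ, such that for all n ≥ n₀, d_Kol( Ỹ₁₂(n)/√Tₙ, N(0, 1/(4θ³)) ) ≤ c(θ) · ln(nΔₙ) · max( (nΔₙ)^{−1/2}, (nΔₙ²)^{1/3} ). In particular, if additionally nΔₙ² → 0, then Ỹ₁₂(n)/√Tₙ converges in distribution to N(0, 1/(4θ³)) as n → ∞. -/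
open MeasureTheory ProbabilityTheory Real Filter Finset
open scoped Topology ENNReal NNReal

noncomputable section

/-- Kolmogorov distance between two Borel measures on `ℝ`. -/
def dKol (μ ν : Measure ℝ) : ℝ :=
  ⨆ z : ℝ, |(μ (Set.Iic z)).toReal - (ν (Set.Iic z)).toReal|

/-- `X 0, X 1 : ℝ → Ω → ℝ` is a pair of independent centered Gaussian processes,
started at `0`, with almost surely continuous paths on `[0,∞)` and the
Ornstein–Uhlenbeck covariance `E[Xᵢ(s)Xᵢ(t)] = (e^{−θ|t−s|} − e^{−θ(t+s)})/(2θ)`. -/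
structure IsOUPair {Ω : Type} [MeasureSpace Ω] (θ : ℝ) (X : Fin 2 → ℝ → Ω → ℝ) : Prop where
  meas : ∀ i t, Measurable (X i t)
  gaussian : ∀ (i : Fin 2) (n : ℕ) (t : Fin n → ℝ) (c : Fin n → ℝ), (∀ j, 0 ≤ t j) →
      ∃ v : NNReal, Measure.map (fun ω => ∑ j, c j * X i (t j) ω) ℙ = gaussianReal 0 v
  indep : IndepFun (fun ω t => X 0 t ω) (fun ω t => X 1 t ω) ℙ
  cont : ∀ᵐ ω ∂(ℙ : Measure Ω), ∀ i, ContinuousOn (fun t => X i t ω) (Set.Ici 0)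
  init : ∀ i ω, X i 0 ω = 0
  cov : ∀ (i : Fin 2) (s t : ℝ), 0 ≤ s → 0 ≤ t →
      ∫ ω, X i s ω * X i t ω ∂ℙ
        = (Real.exp (-θ * |t - s|) - Real.exp (-θ * (t + s))) / (2 * θ)

variable {Ω : Type} [MeasureSpace Ω]

/-- `F_T := T^{-1/2} ∫₀^T X₁(u) X₂(u) du`. -/
def ouF (X : Fin 2 → ℝ → Ω → ℝ) (T : ℝ) (ω : Ω) : ℝ :=
  (1 / Real.sqrt T) * ∫ u in (0:ℝ)..T, X 0 u ω * X 1 u ω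

/-- `X̄ᵢ(T) := T^{-1} ∫₀^T Xᵢ(u) du`. -/
def ouXbar (X : Fin 2 → ℝ → Ω → ℝ) (i : Fin 2) (T : ℝ) (ω : Ω) : ℝ :=
  (1 / T) * ∫ u in (0:ℝ)..T, X i u ω

/-- `Y_{ij}(T) := ∫₀^T Xᵢ(u)Xⱼ(u) du − T·X̄ᵢ(T)·X̄ⱼ(T)`. -/
def ouY (X : Fin 2 → ℝ → Ω → ℝ) (i j : Fin 2) (T : ℝ) (ω : Ω) : ℝ :=
  (∫ u in (0:ℝ)..T, X i u ω * X j u ω) - T * ouXbar X i T ω * ouXbar X j T ω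

/-- Yule's nonsense correlation `ρ(T)`. -/
def ouRho (X : Fin 2 → ℝ → Ω → ℝ) (T : ℝ) (ω : Ω) : ℝ :=
  ouY X 0 1 T ω / Real.sqrt (ouY X 0 0 T ω * ouY X 1 1 T ω)

/-- `A(n) := (√Tₙ/n) Σ_{k<n} X₁(kΔ)X₂(kΔ)` with `Tₙ = nΔ`. -/
def ouA (X : Fin 2 → ℝ → Ω → ℝ) (n : ℕ) (Δ : ℝ) (ω : Ω) : ℝ :=
  (Real.sqrt (n * Δ) / n) * ∑ k ∈ Finset.range n, X 0 (k * Δ) ω * X 1 (k * Δ) ω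

/-- `X̃ᵢ(n) := n^{-1} Σ_{k<n} Xᵢ(kΔ)`. -/
def ouXtilde (X : Fin 2 → ℝ → Ω → ℝ) (i : Fin 2) (n : ℕ) (Δ : ℝ) (ω : Ω) : ℝ :=
  (1 / n) * ∑ k ∈ Finset.range n, X i (k * Δ) ω

/-- `Ỹ_{ij}(n) := Δ Σ_{k<n} Xᵢ(kΔ)Xⱼ(kΔ) − Tₙ·X̃ᵢ(n)·X̃ⱼ(n)` with `Tₙ = nΔ`. -/
def ouYtilde (X : Fin 2 → ℝ → Ω → ℝ) (i j : Fin 2) (n : ℕ) (Δ : ℝ) (ω : Ω) : ℝ :=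
  Δ * ∑ k ∈ Finset.range n, X i (k * Δ) ω * X j (k * Δ) ω
    - (n * Δ) * ouXtilde X i n Δ ω * ouXtilde X j n Δ ω

/-- Yule's discrete nonsense correlation `ρ̃(n)`. -/
def ouRhoTilde (X : Fin 2 → ℝ → Ω → ℝ) (n : ℕ) (Δ : ℝ) (ω : Ω) : ℝ :=
  ouYtilde X 0 1 n Δ ω / Real.sqrt (ouYtilde X 0 0 n Δ ω * ouYtilde X 1 1 n Δ ω)

lemma gauss_moment4 (v : ℝ≥0) : ∫ x, x ^ 4 ∂(gaussianReal 0 v) = 3 * (v : ℝ) ^ 2 := by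
  have h := iteratedDeriv_mgf_zero (X := fun x : ℝ => x) (μ := gaussianReal 0 v) (by simp) 4
  have h' : (∫ x, x ^ 4 ∂(gaussianReal 0 v)) = iteratedDeriv 4 (mgf (fun x ↦ x) (gaussianReal 0 v)) 0 := by
    rw [h]; rfl
  rw [h', mgf_fun_id_gaussianReal]
  simp only [zero_mul, zero_add]
  have hE : ∀ t : ℝ, HasDerivAt (fun t : ℝ => rexp (v * t ^ 2 / 2)) (v * t * rexp (v * t ^ 2 / 2)) t := by
    intro t
    have := (((hasDerivAt_pow 2 t).const_mul (v : ℝ)).div_const 2).exp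
    convert this using 1
    simp; ring
  have d1 : deriv (fun t : ℝ => rexp (v * t ^ 2 / 2)) = fun t => v * t * rexp (v * t ^ 2 / 2) :=
    funext fun t => (hE t).deriv
  have d2 : deriv (fun t : ℝ => v * t * rexp (v * t ^ 2 / 2)) =
      fun t => (v + v ^ 2 * t ^ 2) * rexp (v * t ^ 2 / 2) := by
    funext t
    have := (((hasDerivAt_id t).const_mul (v : ℝ)).mul (hE t)).deriv
    simp only [id] at this
    refine Eq.trans this ?_
    ring
  have d3 : deriv (fun t : ℝ => (v + v ^ 2 * t ^ 2) * rexp (v * t ^ 2 / 2)) =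
      fun t => (3 * v ^ 2 * t + v ^ 3 * t ^ 3) * rexp (v * t ^ 2 / 2) := by
    funext t
    have := ((((hasDerivAt_pow 2 t).const_mul ((v : ℝ) ^ 2)).const_add (v : ℝ)).mul (hE t)).deriv
    refine Eq.trans this ?_
    simp; ring
  have d4 : deriv (fun t : ℝ => (3 * v ^ 2 * t + v ^ 3 * t ^ 3) * rexp (v * t ^ 2 / 2)) =
      fun t => (3 * v ^ 2 + 6 * v ^ 3 * t ^ 2 + v ^ 4 * t ^ 4) * rexp (v * t ^ 2 / 2) := by
    funext t
    have := ((((hasDerivAt_id t).const_mul (3 * (v : ℝ) ^ 2)).add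
      ((hasDerivAt_pow 3 t).const_mul ((v : ℝ) ^ 3))).mul (hE t)).deriv
    refine Eq.trans this ?_
    simp; ring
  rw [iteratedDeriv_succ, iteratedDeriv_succ, iteratedDeriv_succ, iteratedDeriv_one, d1, d2, d3, d4]
  simp

lemma gauss_moment2 (v : ℝ≥0) : ∫ x, x ^ 2 ∂(gaussianReal 0 v) = (v : ℝ) := by
  have h := variance_fun_id_gaussianReal (μ := 0) (v := v)
  rw [variance_eq_integral measurable_id'.aemeasurable] at h
  simpa using h

lemma gauss_interval (a b m : ℝ) (hab : a ≤ b) (hm : ∀ x ∈ Set.Ioc a b, |m| ≤ |x|) :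
    (gaussianReal 0 1).real (Set.Iic b) - (gaussianReal 0 1).real (Set.Iic a)
      ≤ rexp (-m ^ 2 / 2) * (b - a) := by
  have h1 : (gaussianReal 0 1).real (Set.Ioc a b)
      = (gaussianReal 0 1).real (Set.Iic b) - (gaussianReal 0 1).real (Set.Iic a) := by
    rw [show Set.Ioc a b = Set.Iic b \ Set.Iic a by ext x; simp [and_comm], measureReal_sdiff (Set.Iic_subset_Iic.2 hab) measurableSet_Iic]
  rw [← h1, measureReal_def, gaussianReal_apply_eq_integral 0 one_ne_zero,
    ENNReal.toReal_ofReal (integral_nonneg fun x => gaussianPDFReal_nonneg _ _ _)]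
  have h2 : ‖∫ x in Set.Ioc a b, gaussianPDFReal 0 1 x‖ ≤ rexp (-m ^ 2 / 2) * volume.real (Set.Ioc a b) := by
    apply norm_setIntegral_le_of_norm_le_const (by simp)
    intro x hx
    have h3 := sq_le_sq.2 (hm x hx)
    rw [Real.norm_of_nonneg (gaussianPDFReal_nonneg _ _ _), gaussianPDFReal_def]
    simp only [sub_zero, NNReal.coe_one, mul_one]
    have h4 : (√(2 * π))⁻¹ ≤ 1 := by
      apply inv_le_one_of_one_le₀
      rw [Real.one_le_sqrt]
      linarith [Real.pi_gt_three]
    have h5 : rexp (-x ^ 2 / 2) ≤ rexp (-m ^ 2 / 2) := Real.exp_le_exp.2 (by linarith)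
    calc _ ≤ 1 * rexp (-m ^ 2 / 2) := mul_le_mul h4 h5 (Real.exp_pos _).le zero_le_one
      _ = _ := one_mul _
  rw [Real.norm_of_nonneg (integral_nonneg fun x => gaussianPDFReal_nonneg _ _ _)] at h2
  rwa [Real.volume_real_Ioc_of_le hab] at h2

lemma exp_aux (a : ℝ) : rexp (-a ^ 2 / 2) * |a| ≤ 1 := by
  have h1 := Real.add_one_le_exp (a ^ 2 / 2)
  have h2 : |a| ≤ rexp (a ^ 2 / 2) := by
    nlinarith [sq_abs a, sq_nonneg (|a| - 1)]
  calc rexp (-a ^ 2 / 2) * |a| ≤ rexp (-a ^ 2 / 2) * rexp (a ^ 2 / 2) := by gcongr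
    _ = 1 := by rw [← Real.exp_add]; simp [neg_div]

lemma gauss_dilate (a l : ℝ) (hl : 1 ≤ l) :
    |(gaussianReal 0 1).real (Set.Iic (l * a)) - (gaussianReal 0 1).real (Set.Iic a)| ≤ l - 1 := by
  have hh := exp_aux a
  have he := Real.exp_pos (-a ^ 2 / 2)
  rcases le_total 0 a with ha | ha
  · have h0 : a ≤ l * a := by nlinarith
    have h1 := gauss_interval a (l * a) a h0 (fun x hx => by
      rw [abs_of_nonneg ha]; exact hx.1.le.trans (le_abs_self _))
    have h2 : (gaussianReal 0 1).real (Set.Iic a) ≤ (gaussianReal 0 1).real (Set.Iic (l * a)) :=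
      measureReal_mono (Set.Iic_subset_Iic.2 h0)
    rw [abs_of_nonneg (by linarith)]
    rw [abs_of_nonneg ha] at hh
    nlinarith
  · have h0 : l * a ≤ a := by nlinarith
    have h1 := gauss_interval (l * a) a a h0 (fun x hx => by
      rw [abs_of_nonpos ha]; exact (neg_le_neg hx.2).trans (neg_le_abs x))
    have h2 : (gaussianReal 0 1).real (Set.Iic (l * a)) ≤ (gaussianReal 0 1).real (Set.Iic a) :=
      measureReal_mono (Set.Iic_subset_Iic.2 h0)
    rw [abs_of_nonpos (by linarith)]
    rw [abs_of_nonpos ha] at hh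
    nlinarith

lemma gauss_scale (v : ℝ≥0) (hv : v ≠ 0) (z : ℝ) :
    (gaussianReal 0 v).real (Set.Iic z) = (gaussianReal 0 1).real (Set.Iic (z / √v)) := by
  have hs : 0 < √(v : ℝ) := Real.sqrt_pos.2 (by positivity)
  have h := gaussianReal_map_const_mul (μ := 0) (v := 1) (√(v : ℝ))
  have h2 : (NNReal.mk (√(v : ℝ) ^ 2) (sq_nonneg _) * 1 : ℝ≥0) = v := by
    rw [mul_one]; apply NNReal.eq; exact Real.sq_sqrt v.2
  rw [h2, mul_zero] at h
  rw [← h, map_measureReal_apply (by fun_prop) measurableSet_Iic]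
  congr 1
  ext x
  simp only [Set.mem_preimage, Set.mem_Iic]
  rw [le_div_iff₀ hs, mul_comm]

lemma gauss_compare (v w : ℝ≥0) (hw : w ≠ 0) (z : ℝ) :
    |(gaussianReal 0 v).real (Set.Iic z) - (gaussianReal 0 w).real (Set.Iic z)|
      ≤ 2 / (w : ℝ) * |(v : ℝ) - w| := by
  have hw' : 0 < (w : ℝ) := by positivity
  have hv' : 0 ≤ (v : ℝ) := v.2
  by_cases hvw : (v : ℝ) < w / 2
  · have h1 : |(gaussianReal 0 v).real (Set.Iic z) - (gaussianReal 0 w).real (Set.Iic z)| ≤ 1 := by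
      have a1 := measureReal_nonneg (μ := gaussianReal 0 v) (s := Set.Iic z)
      have a2 := measureReal_nonneg (μ := gaussianReal 0 w) (s := Set.Iic z)
      have a3 := measureReal_le_one (μ := gaussianReal 0 v) (s := Set.Iic z)
      have a4 := measureReal_le_one (μ := gaussianReal 0 w) (s := Set.Iic z)
      rw [abs_le]; constructor <;> linarith
    refine h1.trans ?_
    rw [abs_of_neg (by linarith), div_mul_eq_mul_div, le_div_iff₀ hw']
    linarith
  push Not at hvw
  have hv0 : 0 < (v : ℝ) := by linarith
  have hv : v ≠ 0 := by rintro rfl; simp at hv0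
  rw [gauss_scale v hv, gauss_scale w hw]
  have sv : 0 < √(v : ℝ) := Real.sqrt_pos.2 hv0
  have sw : 0 < √(w : ℝ) := Real.sqrt_pos.2 hw'
  have ev := Real.sq_sqrt hv'
  have ew := Real.sq_sqrt hw'.le
  have key : ∀ x y : ℝ, 0 < y → y ≤ x → √x / √y - 1 ≤ (x - y) / y := by
    intro x y hy hxy
    rw [← Real.sqrt_div' _ hy.le]
    have h1 : 1 ≤ x / y := by rwa [one_le_div hy]
    have h2 : √(x / y) ≤ x / y := by
      rw [Real.sqrt_le_left (by linarith)]; nlinarith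
    have : (x - y) / y = x / y - 1 := by field_simp
    linarith
  rcases le_total (w : ℝ) v with h | h
  · have h1 := gauss_dilate (z / √v) (√v / √w) (by rw [one_le_div sw]; exact Real.sqrt_le_sqrt h)
    rw [show √(v : ℝ) / √w * (z / √v) = z / √w by field_simp, abs_sub_comm] at h1
    refine h1.trans ((key v w hw' h).trans ?_)
    rw [abs_of_nonneg (by linarith), div_mul_eq_mul_div]
    gcongr; linarith
  · have h1 := gauss_dilate (z / √w) (√w / √v) (by rw [one_le_div sv]; exact Real.sqrt_le_sqrt h)
    rw [show √(w : ℝ) / √v * (z / √w) = z / √v by field_simp] at h1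
    refine h1.trans ((key w v hv0 h).trans ?_)
    rw [abs_of_nonpos (by linarith), div_mul_eq_mul_div, div_le_div_iff₀ hv0 hw']
    nlinarith

lemma gv_memLp {Ω : Type} [MeasurableSpace Ω] {μ : Measure Ω} {f : Ω → ℝ} (hf : Measurable f)
    {v : ℝ≥0} (h : μ.map f = gaussianReal 0 v) (p : ℝ≥0) : MemLp f p μ := by
  have h1 := memLp_id_gaussianReal (μ := 0) (v := v) p
  rw [← h] at h1
  exact (memLp_map_measure_iff (by fun_prop) hf.aemeasurable).1 h1

/-- A finite family all of whose linear combinations are centered Gaussian, with covariance `r`. -/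
structure GVec {Ω : Type} [MeasurableSpace Ω] (μ : Measure Ω) {n : ℕ} (x : Fin n → Ω → ℝ)
    (r : Fin n → Fin n → ℝ) : Prop where
  meas : ∀ i, Measurable (x i)
  gauss : ∀ c : Fin n → ℝ, ∃ v : ℝ≥0, μ.map (fun ω => ∑ j, c j * x j ω) = gaussianReal 0 v
  cov : ∀ i j, ∫ ω, x i ω * x j ω ∂μ = r i j

namespace GVec
variable {Ω : Type} [MeasurableSpace Ω] {μ : Measure Ω} {n : ℕ} {x : Fin n → Ω → ℝ}
    {r : Fin n → Fin n → ℝ}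

lemma memLp (h : GVec μ x r) (i : Fin n) (p : ℝ≥0) : MemLp (x i) p μ := by
  obtain ⟨v, hv⟩ := h.gauss (Pi.single i 1)
  have : (fun ω => ∑ j, (Pi.single i 1 : Fin n → ℝ) j * x j ω) = x i := by
    funext ω
    simp [Pi.single_apply]
  rw [this] at hv
  exact gv_memLp (h.meas i) hv p

lemma int2 (h : GVec μ x r) (i j : Fin n) : Integrable (fun ω => x i ω * x j ω) μ :=
  MemLp.integrable_mul (p := 2) (q := 2) (by exact_mod_cast h.memLp i 2) (by exact_mod_cast h.memLp j 2)

lemma symm (h : GVec μ x r) (i j : Fin n) : r i j = r j i := by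
  rw [← h.cov, ← h.cov]; simp_rw [mul_comm]

lemma meas_lin (h : GVec μ x r) (c : Fin n → ℝ) : Measurable (fun ω => ∑ j, c j * x j ω) :=
  Finset.measurable_sum _ fun j _ => (h.meas j).const_mul _

lemma lin_sq (c : Fin n → ℝ) (ω : Ω) : (∑ j, c j * x j ω) ^ 2
    = ∑ i, ∑ j, c i * c j * (x i ω * x j ω) := by
  rw [sq, Finset.sum_mul_sum]
  refine Finset.sum_congr rfl fun i _ => Finset.sum_congr rfl fun j _ => by ring

lemma int_lin_sq (h : GVec μ x r) (c : Fin n → ℝ) :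
    ∫ ω, (∑ j, c j * x j ω) ^ 2 ∂μ = ∑ i, ∑ j, c i * c j * r i j := by
  simp_rw [lin_sq]
  rw [integral_finsetSum _ fun i _ => integrable_finsetSum _ fun j _ => (h.int2 i j).const_mul _]
  refine Finset.sum_congr rfl fun i _ => ?_
  rw [integral_finsetSum _ fun j _ => (h.int2 i j).const_mul _]
  refine Finset.sum_congr rfl fun j _ => ?_
  rw [integral_const_mul, h.cov]

lemma law (h : GVec μ x r) (c : Fin n → ℝ) :
    μ.map (fun ω => ∑ j, c j * x j ω) = gaussianReal 0 (∑ i, ∑ j, c i * c j * r i j).toNNReal := by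
  obtain ⟨v, hv⟩ := h.gauss c
  rw [hv]
  congr 1
  rw [← h.int_lin_sq]
  have h1 := gauss_moment2 v
  rw [← hv, integral_map (h.meas_lin c).aemeasurable (by fun_prop)] at h1
  rw [h1]; simp

lemma pos (h : GVec μ x r) (c : Fin n → ℝ) : 0 ≤ ∑ i, ∑ j, c i * c j * r i j := by
  rw [← h.int_lin_sq]
  exact integral_nonneg fun ω => sq_nonneg _

lemma int_lin_four (h : GVec μ x r) (c : Fin n → ℝ) :
    ∫ ω, (∑ j, c j * x j ω) ^ 4 ∂μ = 3 * (∑ i, ∑ j, c i * c j * r i j) ^ 2 := by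
  have h1 := gauss_moment4 (∑ i, ∑ j, c i * c j * r i j).toNNReal
  rw [← h.law c, integral_map (h.meas_lin c).aemeasurable (by fun_prop),
    Real.coe_toNNReal _ (h.pos c)] at h1
  exact h1

lemma memLp_lin (h : GVec μ x r) (c : Fin n → ℝ) (p : ℝ≥0) :
    MemLp (fun ω => ∑ j, c j * x j ω) p μ := gv_memLp (h.meas_lin c) (h.law c) p

lemma int_lin_four_integrable (h : GVec μ x r) (c : Fin n → ℝ) :
    Integrable (fun ω => (∑ j, c j * x j ω) ^ 4) μ := by
  have := (h.memLp_lin c 4).integrable_norm_pow (p := 4) (by norm_num)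
  refine this.congr (ae_of_all _ fun ω => ?_)
  simp only [Real.norm_eq_abs]
  rw [Even.pow_abs (by decide)]

/-- Sign-combination. -/
def comb (i j k l : Fin n) (a b c : ℝ) : Fin n → ℝ :=
  Pi.single i 1 + a • Pi.single j 1 + b • Pi.single k 1 + c • Pi.single l 1

lemma comb_sum (i j k l : Fin n) (a b c : ℝ) (f : Fin n → ℝ) :
    ∑ m, comb i j k l a b c m * f m = f i + a * f j + b * f k + c * f l := by
  simp [comb, add_mul, Finset.sum_add_distrib, Pi.single_apply]

lemma comb_sum2 (h : GVec μ x r) (i j k l : Fin n) (a b c : ℝ) :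
    ∑ m, ∑ p, comb i j k l a b c m * comb i j k l a b c p * r m p
      = r i i + a ^ 2 * r j j + b ^ 2 * r k k + c ^ 2 * r l l + 2 * a * r i j + 2 * b * r i k
        + 2 * c * r i l + 2 * a * b * r j k + 2 * a * c * r j l + 2 * b * c * r k l := by
  simp_rw [mul_assoc, ← Finset.mul_sum, comb_sum]
  rw [h.symm j i, h.symm k i, h.symm l i, h.symm k j, h.symm l j, h.symm l k]
  ring

lemma quad_id (w x y z : ℝ) : w * x * y * z = (1 / 192) * (
    (w + 1 * x + 1 * y + 1 * z) ^ 4 - (w + 1 * x + 1 * y + (-1) * z) ^ 4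
    - (w + 1 * x + (-1) * y + 1 * z) ^ 4 + (w + 1 * x + (-1) * y + (-1) * z) ^ 4
    - (w + (-1) * x + 1 * y + 1 * z) ^ 4 + (w + (-1) * x + 1 * y + (-1) * z) ^ 4
    + (w + (-1) * x + (-1) * y + 1 * z) ^ 4 - (w + (-1) * x + (-1) * y + (-1) * z) ^ 4) := by
  ring

lemma isserlis (h : GVec μ x r) (i j k l : Fin n) :
    Integrable (fun ω => x i ω * x j ω * x k ω * x l ω) μ ∧
    ∫ ω, x i ω * x j ω * x k ω * x l ω ∂μ = r i j * r k l + r i k * r j l + r i l * r j k := by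
  have H : ∀ a b c : ℝ, Integrable (fun ω => (x i ω + a * x j ω + b * x k ω + c * x l ω) ^ 4) μ := by
    intro a b c
    have := h.int_lin_four_integrable (comb i j k l a b c)
    simp_rw [comb_sum] at this
    exact this
  have E : ∀ a b c : ℝ, ∫ ω, (x i ω + a * x j ω + b * x k ω + c * x l ω) ^ 4 ∂μ
      = 3 * (r i i + a ^ 2 * r j j + b ^ 2 * r k k + c ^ 2 * r l l + 2 * a * r i j + 2 * b * r i k
        + 2 * c * r i l + 2 * a * b * r j k + 2 * a * c * r j l + 2 * b * c * r k l) ^ 2 := by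
    intro a b c
    have := h.int_lin_four (comb i j k l a b c)
    rw [h.comb_sum2] at this
    simp_rw [comb_sum] at this
    exact this
  have Q : (fun ω => x i ω * x j ω * x k ω * x l ω) = fun ω => (1 / 192) * (
    (x i ω + 1 * x j ω + 1 * x k ω + 1 * x l ω) ^ 4 - (x i ω + 1 * x j ω + 1 * x k ω + (-1) * x l ω) ^ 4
    - (x i ω + 1 * x j ω + (-1) * x k ω + 1 * x l ω) ^ 4 + (x i ω + 1 * x j ω + (-1) * x k ω + (-1) * x l ω) ^ 4
    - (x i ω + (-1) * x j ω + 1 * x k ω + 1 * x l ω) ^ 4 + (x i ω + (-1) * x j ω + 1 * x k ω + (-1) * x l ω) ^ 4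
    + (x i ω + (-1) * x j ω + (-1) * x k ω + 1 * x l ω) ^ 4 - (x i ω + (-1) * x j ω + (-1) * x k ω + (-1) * x l ω) ^ 4) :=
    funext fun ω => quad_id _ _ _ _
  have i1 := H 1 1 1
  have i2 := H 1 1 (-1)
  have i3 := H 1 (-1) 1
  have i4 := H 1 (-1) (-1)
  have i5 := H (-1) 1 1
  have i6 := H (-1) 1 (-1)
  have i7 := H (-1) (-1) 1
  have i8 := H (-1) (-1) (-1)
  rw [Q]
  have j2 := i1.sub i2
  have j3 := j2.sub i3
  have j4 := j3.add i4
  have j5 := j4.sub i5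
  have j6 := j5.add i6
  have j7 := j6.add i7
  have j8 := j7.sub i8
  refine ⟨j8.const_mul _, ?_⟩
  rw [integral_const_mul]
  erw [integral_sub j7 i8, integral_add j6 i7, integral_add j5 i6, integral_sub j4 i5,
    integral_add j3 i4, integral_sub j2 i3, integral_sub i1 i2]
  simp only [E]
  ring

end GVec

lemma integral_quad_aux {Ω : Type} [MeasurableSpace Ω] {μ : Measure Ω} [IsProbabilityMeasure μ]
    {f g : Ω → ℝ} (hf : Integrable f μ) (hg : Integrable g μ) (c d : ℝ) :
    ∫ ω, (f ω - c * g ω + d) ∂μ = (∫ ω, f ω ∂μ) - c * (∫ ω, g ω ∂μ) + d := by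
  have h1 : Integrable (fun ω => c * g ω) μ := hg.const_mul c
  have h2 : Integrable (fun ω => f ω - c * g ω) μ := hf.sub h1
  rw [integral_add h2 (integrable_const _), integral_sub hf h1, integral_const_mul]
  simp

namespace GVec
variable {Ω : Type} [MeasurableSpace Ω] {μ : Measure Ω} {n : ℕ} {x y : Fin n → Ω → ℝ}
    {r : Fin n → Fin n → ℝ}

lemma quad_int (h : GVec μ y r) :
    Integrable (fun ω => ∑ k, ∑ l, r k l * (y k ω * y l ω)) μ :=
  integrable_finsetSum _ fun i _ => integrable_finsetSum _ fun j _ => (h.int2 i j).const_mul _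

lemma quad_mean (h : GVec μ y r) :
    ∫ ω, (∑ k, ∑ l, r k l * (y k ω * y l ω)) ∂μ = ∑ k, ∑ l, r k l * r k l := by
  rw [integral_finsetSum _ fun i _ => integrable_finsetSum _ fun j _ => (h.int2 i j).const_mul _]
  refine Finset.sum_congr rfl fun i _ => ?_
  rw [integral_finsetSum _ fun j _ => (h.int2 i j).const_mul _]
  refine Finset.sum_congr rfl fun j _ => ?_
  rw [integral_const_mul, h.cov]

lemma quad_sq_eq (ω : Ω) : (∑ k, ∑ l, r k l * (y k ω * y l ω)) ^ 2
    = ∑ k, ∑ l, ∑ m, ∑ p, r k l * r m p * (y k ω * y l ω * y m ω * y p ω) := by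
  rw [sq, Finset.sum_mul]
  refine Finset.sum_congr rfl fun k _ => ?_
  rw [Finset.sum_mul]
  refine Finset.sum_congr rfl fun l _ => ?_
  rw [Finset.mul_sum]
  refine Finset.sum_congr rfl fun m _ => ?_
  rw [Finset.mul_sum]
  refine Finset.sum_congr rfl fun p _ => by ring

lemma quad_sq_int (h : GVec μ y r) :
    Integrable (fun ω => (∑ k, ∑ l, r k l * (y k ω * y l ω)) ^ 2) μ := by
  simp_rw [quad_sq_eq]
  exact integrable_finsetSum _ fun k _ => integrable_finsetSum _ fun l _ =>
    integrable_finsetSum _ fun m _ => integrable_finsetSum _ fun p _ =>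
    (h.isserlis k l m p).1.const_mul _

lemma quad_sq_mean (h : GVec μ y r) :
    ∫ ω, (∑ k, ∑ l, r k l * (y k ω * y l ω)) ^ 2 ∂μ
      = ∑ k, ∑ l, ∑ m, ∑ p, r k l * r m p * (r k l * r m p + r k m * r l p + r k p * r l m) := by
  simp_rw [quad_sq_eq]
  rw [integral_finsetSum _ fun k _ => integrable_finsetSum _ fun l _ =>
    integrable_finsetSum _ fun m _ => integrable_finsetSum _ fun p _ =>
    (h.isserlis k l m p).1.const_mul _]
  refine Finset.sum_congr rfl fun k _ => ?_
  rw [integral_finsetSum _ fun l _ =>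
    integrable_finsetSum _ fun m _ => integrable_finsetSum _ fun p _ =>
    (h.isserlis k l m p).1.const_mul _]
  refine Finset.sum_congr rfl fun l _ => ?_
  rw [integral_finsetSum _ fun m _ => integrable_finsetSum _ fun p _ =>
    (h.isserlis k l m p).1.const_mul _]
  refine Finset.sum_congr rfl fun m _ => ?_
  rw [integral_finsetSum _ fun p _ => (h.isserlis k l m p).1.const_mul _]
  refine Finset.sum_congr rfl fun p _ => ?_
  rw [integral_const_mul, (h.isserlis k l m p).2]

lemma four_sum_bound (B K : ℝ) (hr0 : ∀ i j, 0 ≤ r i j) (hrB : ∀ i j, r i j ≤ B)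
    (hK : ∀ i, ∑ j, r i j ≤ K) (hK0 : 0 ≤ K) (hB : 0 ≤ B) :
    ∑ k, ∑ l, ∑ m, ∑ p, r k l * r m p * (r k m * r l p + r k p * r l m) ≤ 2 * (B * n * K ^ 3) := by
  have key1 : ∀ k : Fin n, ∑ l, ∑ m, ∑ p, r k l * r k m * r l p ≤ K ^ 3 := by
    intro k
    calc ∑ l, ∑ m, ∑ p, r k l * r k m * r l p
        = ∑ l, r k l * ((∑ m, r k m) * ∑ p, r l p) := by
          refine Finset.sum_congr rfl fun l _ => ?_
          rw [Finset.sum_mul_sum, Finset.mul_sum]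
          refine Finset.sum_congr rfl fun m _ => ?_
          rw [Finset.mul_sum]
          refine Finset.sum_congr rfl fun p _ => by ring
      _ ≤ ∑ l, r k l * (K * K) := by
          refine Finset.sum_le_sum fun l _ => mul_le_mul_of_nonneg_left ?_ (hr0 _ _)
          exact mul_le_mul (hK k) (hK l) (Finset.sum_nonneg fun _ _ => hr0 _ _) hK0
      _ = (∑ l, r k l) * (K * K) := by rw [Finset.sum_mul]
      _ ≤ K * (K * K) := mul_le_mul_of_nonneg_right (hK k) (by positivity)
      _ = K ^ 3 := by ring
  have key2 : ∀ k : Fin n, ∑ l, ∑ m, ∑ p, r k l * r k p * r l m ≤ K ^ 3 := by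
    intro k
    refine le_trans (le_of_eq ?_) (key1 k)
    refine Finset.sum_congr rfl fun l _ => ?_
    rw [Finset.sum_comm]
  calc ∑ k, ∑ l, ∑ m, ∑ p, r k l * r m p * (r k m * r l p + r k p * r l m)
      ≤ ∑ k, ∑ l, ∑ m, ∑ p, (B * (r k l * r k m * r l p) + B * (r k l * r k p * r l m)) := by
        refine Finset.sum_le_sum fun k _ => Finset.sum_le_sum fun l _ => Finset.sum_le_sum fun m _ =>
          Finset.sum_le_sum fun p _ => ?_
        have : 0 ≤ r k l * (r k m * r l p + r k p * r l m) :=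
          mul_nonneg (hr0 _ _) (add_nonneg (mul_nonneg (hr0 _ _) (hr0 _ _)) (mul_nonneg (hr0 _ _) (hr0 _ _)))
        nlinarith [mul_le_mul_of_nonneg_right (hrB m p) this]
    _ = ∑ k, (B * (∑ l, ∑ m, ∑ p, r k l * r k m * r l p) + B * (∑ l, ∑ m, ∑ p, r k l * r k p * r l m)) := by
        simp_rw [Finset.sum_add_distrib, Finset.mul_sum]
    _ ≤ ∑ k : Fin n, (B * K ^ 3 + B * K ^ 3) := by
        refine Finset.sum_le_sum fun k _ => add_le_add ?_ ?_
        · exact mul_le_mul_of_nonneg_left (key1 k) hB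
        · exact mul_le_mul_of_nonneg_left (key2 k) hB
    _ = 2 * (B * n * K ^ 3) := by simp; ring

lemma quad_var [IsProbabilityMeasure μ] (h : GVec μ y r) (B K : ℝ) (hr0 : ∀ i j, 0 ≤ r i j) (hrB : ∀ i j, r i j ≤ B)
    (hK : ∀ i, ∑ j, r i j ≤ K) (hK0 : 0 ≤ K) (hB : 0 ≤ B) :
    ∫ ω, |(∑ k, ∑ l, r k l * (y k ω * y l ω)) - ∑ k, ∑ l, r k l * r k l| ∂μ
      ≤ √(2 * (B * n * K ^ 3)) := by
  set S := ∑ k, ∑ l, r k l * r k l with hS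
  set V : Ω → ℝ := fun ω => ∑ k, ∑ l, r k l * (y k ω * y l ω) with hV
  have i1 : Integrable V μ := h.quad_int
  have i2 : Integrable (fun ω => V ω ^ 2) μ := h.quad_sq_int
  have m1 : ∫ ω, V ω ∂μ = S := h.quad_mean
  have m2 := h.quad_sq_mean
  have i3 : Integrable (fun ω => (V ω - S) ^ 2) μ := by
    have : (fun ω => (V ω - S) ^ 2) = fun ω => V ω ^ 2 - 2 * S * V ω + S ^ 2 := by
      funext ω; ring
    rw [this]
    exact (i2.sub (i1.const_mul _)).add (integrable_const _)
  have var : ∫ ω, (V ω - S) ^ 2 ∂μ ≤ 2 * (B * n * K ^ 3) := by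
    have e : ∫ ω, (V ω - S) ^ 2 ∂μ = (∫ ω, V ω ^ 2 ∂μ) - S ^ 2 := by
      have : (fun ω => (V ω - S) ^ 2) = fun ω => V ω ^ 2 - 2 * S * V ω + S ^ 2 := by
        funext ω; ring
      rw [this, integral_quad_aux i2 i1, m1]
      ring
    have e2 : S ^ 2 = ∑ k, ∑ l, ∑ m, ∑ p, r k l * r m p * (r k l * r m p) := by
      rw [hS, sq, Finset.sum_mul]
      refine Finset.sum_congr rfl fun k _ => ?_
      rw [Finset.sum_mul]
      refine Finset.sum_congr rfl fun l _ => ?_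
      rw [Finset.mul_sum]
      refine Finset.sum_congr rfl fun m _ => ?_
      rw [Finset.mul_sum]
      refine Finset.sum_congr rfl fun p _ => by ring
    rw [e, m2, e2]
    refine le_trans (le_of_eq ?_) (four_sum_bound B K hr0 hrB hK hK0 hB)
    simp_rw [← Finset.sum_sub_distrib]
    refine Finset.sum_congr rfl fun k _ => Finset.sum_congr rfl fun l _ =>
      Finset.sum_congr rfl fun m _ => Finset.sum_congr rfl fun p _ => by ring
  apply Real.le_sqrt_of_sq_le
  refine le_trans ?_ var
  have i4 : Integrable (fun ω => |V ω - S|) μ := (i1.sub (integrable_const S)).abs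
  set A := ∫ ω, |V ω - S| ∂μ with hA
  have : 0 ≤ ∫ ω, (|V ω - S| - A) ^ 2 ∂μ := integral_nonneg fun ω => sq_nonneg _
  have e3 : (fun ω => (|V ω - S| - A) ^ 2) = fun ω => (V ω - S) ^ 2 - 2 * A * |V ω - S| + A ^ 2 := by
    funext ω
    rw [← sq_abs (V ω - S)]; ring
  rw [e3, integral_quad_aux i3 i4, ← hA] at this
  nlinarith

lemma lin_var_bound (hr0 : ∀ i j, 0 ≤ r i j) (K a : ℝ) (hK : ∀ i, ∑ j, r i j ≤ K)
    (c : Fin n → ℝ) (hc0 : ∀ i, 0 ≤ c i) (hc : ∀ i, c i ≤ a) (ha : 0 ≤ a) :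
    ∑ i, ∑ j, c i * c j * r i j ≤ a ^ 2 * (n * K) := by
  calc ∑ i, ∑ j, c i * c j * r i j ≤ ∑ i, ∑ j, a ^ 2 * r i j := by
        refine Finset.sum_le_sum fun i _ => Finset.sum_le_sum fun j _ => ?_
        refine mul_le_mul_of_nonneg_right ?_ (hr0 _ _)
        rw [sq]
        exact mul_le_mul (hc _) (hc _) (hc0 _) ha
    _ = a ^ 2 * ∑ i, ∑ j, r i j := by simp_rw [Finset.mul_sum]
    _ ≤ a ^ 2 * ∑ i : Fin n, K := by
        refine mul_le_mul_of_nonneg_left (Finset.sum_le_sum fun i _ => hK i) (sq_nonneg _)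
    _ = _ := by simp

/-- centered coordinates -/
def cen (v : Fin n → ℝ) (k : Fin n) : ℝ := v k - ∑ j, (1 / (n : ℝ)) * v j

lemma cen_quad (hs : ∀ i j, r i j = r j i) (v : Fin n → ℝ) :
    ∑ k, ∑ l, cen v k * cen v l * r k l = (∑ k, ∑ l, r k l * (v k * v l))
      - 2 * (∑ j, (1 / (n : ℝ)) * v j) * (∑ k, (∑ l, r k l) * v k)
      + (∑ j, (1 / (n : ℝ)) * v j) ^ 2 * ∑ k, ∑ l, r k l := by
  unfold cen
  generalize (∑ j, (1 / (n : ℝ)) * v j) = m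
  have h1 : ∑ k, ∑ l, m * v k * r k l = m * ∑ k, (∑ l, r k l) * v k := by
    rw [Finset.mul_sum]
    refine Finset.sum_congr rfl fun k _ => ?_
    rw [Finset.sum_mul, Finset.mul_sum]
    refine Finset.sum_congr rfl fun l _ => by ring
  have h2 : ∑ k, ∑ l, m * v l * r k l = m * ∑ k, (∑ l, r k l) * v k := by
    rw [← h1, Finset.sum_comm]
    refine Finset.sum_congr rfl fun k _ => Finset.sum_congr rfl fun l _ => by rw [hs]
  have h3 : ∑ k, ∑ l, m ^ 2 * r k l = m ^ 2 * ∑ k, ∑ l, r k l := by simp_rw [Finset.mul_sum]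
  have : ∀ k l, (v k - m) * (v l - m) * r k l
      = r k l * (v k * v l) - m * v k * r k l - m * v l * r k l + m ^ 2 * r k l := fun k l => by ring
  simp_rw [this, Finset.sum_add_distrib, Finset.sum_sub_distrib]
  rw [h1, h2, h3]; ring

lemma int_lin_sq_integrable (h : GVec μ y r) (c : Fin n → ℝ) :
    Integrable (fun ω => (∑ j, c j * y j ω) ^ 2) μ := by
  have := (h.memLp_lin c 2)
  exact MemLp.integrable_sq (by exact_mod_cast this)

lemma cen_L1 [IsProbabilityMeasure μ] (h : GVec μ y r) (hn : 0 < n) (B K : ℝ)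
    (hr0 : ∀ i j, 0 ≤ r i j) (hrB : ∀ i j, r i j ≤ B)
    (hK : ∀ i, ∑ j, r i j ≤ K) (hK0 : 0 < K) (hB : 0 ≤ B) :
    Integrable (fun ω => ∑ k, ∑ l, cen (fun i => y i ω) k * cen (fun i => y i ω) l * r k l) μ ∧
    ∫ ω, |(∑ k, ∑ l, cen (fun i => y i ω) k * cen (fun i => y i ω) l * r k l)
        - ∑ k, ∑ l, r k l * r k l| ∂μ
      ≤ √(2 * (B * n * K ^ 3)) + 3 * K ^ 2 := by
  have hn' : (0 : ℝ) < n := by exact_mod_cast hn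
  simp_rw [cen_quad h.symm]
  set S := ∑ k, ∑ l, r k l * r k l with hS
  set V : Ω → ℝ := fun ω => ∑ k, ∑ l, r k l * (y k ω * y l ω) with hV
  set M : Ω → ℝ := fun ω => ∑ j, (1 / (n : ℝ)) * y j ω with hM
  set W : Ω → ℝ := fun ω => ∑ k, (∑ l, r k l) * y k ω with hW
  set R := ∑ k, ∑ l, r k l with hR
  have iV : Integrable V μ := h.quad_int
  have iM : Integrable (fun ω => M ω ^ 2) μ := h.int_lin_sq_integrable _
  have iW : Integrable (fun ω => W ω ^ 2) μ := h.int_lin_sq_integrable _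
  have iMW : Integrable (fun ω => M ω * W ω) μ :=
    MemLp.integrable_mul (p := 2) (q := 2) (by exact_mod_cast h.memLp_lin _ 2)
      (by exact_mod_cast h.memLp_lin _ 2)
  have bM : ∫ ω, M ω ^ 2 ∂μ ≤ K / n := by
    rw [h.int_lin_sq]
    refine (lin_var_bound hr0 K (1 / n) hK (fun _ => 1 / (n : ℝ)) (fun _ => by positivity)
      (fun _ => le_rfl) (by positivity)).trans (le_of_eq ?_)
    field_simp
  have bW : ∫ ω, W ω ^ 2 ∂μ ≤ n * K ^ 3 := by
    rw [h.int_lin_sq]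
    refine (lin_var_bound hr0 K K hK (fun k => ∑ l, r k l)
      (fun _ => Finset.sum_nonneg fun _ _ => hr0 _ _) hK hK0.le).trans (le_of_eq ?_)
    ring
  have bR : R ≤ n * K := by
    calc R ≤ ∑ k : Fin n, K := Finset.sum_le_sum fun i _ => hK i
      _ = _ := by simp
  have R0 : 0 ≤ R := Finset.sum_nonneg fun _ _ => Finset.sum_nonneg fun _ _ => hr0 _ _
  have iAll : Integrable (fun ω => V ω - 2 * M ω * W ω + M ω ^ 2 * R) μ := by
    have : (fun ω => V ω - 2 * M ω * W ω + M ω ^ 2 * R)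
        = fun ω => V ω - 2 * (M ω * W ω) + M ω ^ 2 * R := by funext ω; ring
    rw [this]
    exact (iV.sub (iMW.const_mul _)).add (iM.mul_const _)
  refine ⟨iAll, ?_⟩
  have pt : ∀ ω, |V ω - 2 * M ω * W ω + M ω ^ 2 * R - S|
      ≤ |V ω - S| + (2 * (n * K) * M ω ^ 2 + (1 / (n * K)) * W ω ^ 2) := by
    intro ω
    have e1 : |V ω - 2 * M ω * W ω + M ω ^ 2 * R - S| ≤ |V ω - S| + |2 * M ω * W ω| + |M ω ^ 2 * R| := by
      have : V ω - 2 * M ω * W ω + M ω ^ 2 * R - S = (V ω - S) - 2 * M ω * W ω + M ω ^ 2 * R := by ring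
      rw [this]
      exact (abs_add_le _ _).trans (add_le_add (abs_sub _ _) le_rfl)
    have e2 : |M ω ^ 2 * R| ≤ n * K * M ω ^ 2 := by
      rw [abs_of_nonneg (by positivity)]
      nlinarith [sq_nonneg (M ω)]
    have e3 : |2 * M ω * W ω| ≤ n * K * M ω ^ 2 + (1 / (n * K)) * W ω ^ 2 := by
      have hp : 0 < n * K := by positivity
      have e4 : n * K * M ω ^ 2 + (1 / (n * K)) * W ω ^ 2 = ((n * K * M ω) ^ 2 + W ω ^ 2) / (n * K) := by
        field_simp
      rw [e4, le_div_iff₀ hp, ← abs_of_pos hp, ← abs_mul, abs_of_pos hp]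
      rw [abs_le]; constructor <;> nlinarith [sq_nonneg (n * K * M ω - W ω), sq_nonneg (n * K * M ω + W ω)]
    linarith
  have iR : Integrable (fun ω => |V ω - S| + (2 * (n * K) * M ω ^ 2 + (1 / (n * K)) * W ω ^ 2)) μ :=
    ((iV.sub (integrable_const S)).abs).add ((iM.const_mul _).add (iW.const_mul _))
  refine (integral_mono (iAll.sub (integrable_const S)).abs iR pt).trans ?_
  have iVS : Integrable (fun ω => |V ω - S|) μ := (iV.sub (integrable_const S)).abs
  have iM' : Integrable (fun ω => 2 * (n * K) * M ω ^ 2) μ := iM.const_mul _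
  have iW' : Integrable (fun ω => (1 / (n * K)) * W ω ^ 2) μ := iW.const_mul _
  have iMW' : Integrable (fun ω => 2 * (n * K) * M ω ^ 2 + (1 / (n * K)) * W ω ^ 2) μ := iM'.add iW'
  rw [integral_add iVS iMW', integral_add iM' iW', integral_const_mul, integral_const_mul]
  have q := h.quad_var B K hr0 hrB hK hK0.le hB
  have e5 : 2 * (n * K) * (∫ ω, M ω ^ 2 ∂μ) ≤ 2 * (n * K) * (K / n) := by gcongr
  have e6 : (1 / (n * K)) * (∫ ω, W ω ^ 2 ∂μ) ≤ (1 / (n * K)) * (n * K ^ 3) := by gcongr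
  have e7 : 2 * (n * K) * (K / n) + (1 / (n * K)) * (n * K ^ 3) = 3 * K ^ 2 := by
    field_simp; ring
  linarith

lemma cond_bound [IsProbabilityMeasure μ] (hx : GVec μ x r) (hy : GVec μ y r)
    (hind : IndepFun (fun ω i => x i ω) (fun ω i => y i ω) μ)
    (C : (Fin n → ℝ) → Fin n → ℝ) (hC : ∀ i, Measurable fun v => C v i) (w : ℝ≥0) (hw : w ≠ 0)
    (hVint : Integrable (fun ω => ∑ k, ∑ l, C (fun i => y i ω) k * C (fun i => y i ω) l * r k l) μ)
    (z : ℝ) :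
    |(μ.map (fun ω => ∑ k, C (fun i => y i ω) k * x k ω)).real (Set.Iic z)
        - (gaussianReal 0 w).real (Set.Iic z)|
      ≤ 2 / (w : ℝ) * ∫ ω, |(∑ k, ∑ l, C (fun i => y i ω) k * C (fun i => y i ω) l * r k l) - w| ∂μ := by
  have mx : Measurable (fun ω i => x i ω) := measurable_pi_lambda _ hx.meas
  have my : Measurable (fun ω i => y i ω) := measurable_pi_lambda _ hy.meas
  have joint := (indepFun_iff_map_prod_eq_prod_map_map my.aemeasurable mx.aemeasurable).1 hind.symm
  have mf : Measurable (fun q : (Fin n → ℝ) × (Fin n → ℝ) => ∑ k, C q.1 k * q.2 k) :=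
    Finset.measurable_sum _ fun k _ => ((hC k).comp measurable_fst).mul
      ((measurable_pi_apply k).comp measurable_snd)
  set s : Set ((Fin n → ℝ) × (Fin n → ℝ)) := (fun q => ∑ k, C q.1 k * q.2 k) ⁻¹' Set.Iic z with hs
  have ms : MeasurableSet s := mf measurableSet_Iic
  have : IsProbabilityMeasure (μ.map (fun ω i => x i ω)) := Measure.isProbabilityMeasure_map mx.aemeasurable
  have : IsProbabilityMeasure (μ.map (fun ω i => y i ω)) := Measure.isProbabilityMeasure_map my.aemeasurable
  have e1 : (μ.map (fun ω => ∑ k, C (fun i => y i ω) k * x k ω)) (Set.Iic z)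
      = ∫⁻ ω, (μ.map (fun ω i => x i ω)) (Prod.mk (fun i => y i ω) ⁻¹' s) ∂μ := by
    rw [← lintegral_map (f := fun v => (μ.map (fun ω i => x i ω)) (Prod.mk v ⁻¹' s))
      (measurable_measure_prodMk_left ms) my, ← Measure.prod_apply ms, ← joint,
      Measure.map_apply (my.prodMk mx) ms]
    exact Measure.map_apply (mf.comp (my.prodMk mx)) measurableSet_Iic
  have mg : Measurable (fun ω => (μ.map (fun ω i => x i ω)) (Prod.mk (fun i => y i ω) ⁻¹' s)) :=
    (measurable_measure_prodMk_left ms).comp my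
  have e2 : ∀ ω, ((μ.map (fun ω i => x i ω)) (Prod.mk (fun i => y i ω) ⁻¹' s)).toReal
      = (gaussianReal 0 (∑ k, ∑ l, C (fun i => y i ω) k * C (fun i => y i ω) l * r k l).toNNReal).real
        (Set.Iic z) := by
    intro ω
    rw [← hx.law, measureReal_def, Measure.map_apply mx (measurable_prodMk_left ms),
      Measure.map_apply (hx.meas_lin _) measurableSet_Iic]
    rfl
  have e3 : (μ.map (fun ω => ∑ k, C (fun i => y i ω) k * x k ω)).real (Set.Iic z)
      = ∫ ω, ((μ.map (fun ω i => x i ω)) (Prod.mk (fun i => y i ω) ⁻¹' s)).toReal ∂μ := by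
    rw [measureReal_def, e1, integral_toReal mg.aemeasurable (ae_of_all _ fun ω => measure_lt_top _ _)]
  have ig : Integrable (fun ω => ((μ.map (fun ω i => x i ω)) (Prod.mk (fun i => y i ω) ⁻¹' s)).toReal) μ := by
    refine Integrable.of_bound (C := 1) mg.ennreal_toReal.aestronglyMeasurable (ae_of_all _ fun ω => ?_)
    rw [Real.norm_of_nonneg ENNReal.toReal_nonneg]
    exact measureReal_le_one
  have e4 : (gaussianReal 0 w).real (Set.Iic z) = ∫ ω, (gaussianReal 0 w).real (Set.Iic z) ∂μ := by simp
  rw [e3, e4, ← integral_sub ig (integrable_const _), ← integral_const_mul]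
  refine (abs_integral_le_integral_abs).trans ?_
  refine integral_mono (ig.sub (integrable_const _)).abs ((hVint.sub (integrable_const _)).abs.const_mul _) ?_
  intro ω
  simp only
  rw [e2]
  have := gauss_compare (∑ k, ∑ l, C (fun i => y i ω) k * C (fun i => y i ω) l * r k l).toNNReal w hw z
  rwa [Real.coe_toNNReal _ (hx.pos _)] at this

end GVec

/-- Discrete OU covariance. -/
def rr (θ Δ : ℝ) (k l : ℕ) : ℝ :=
  (Real.exp (-θ * |(l : ℝ) * Δ - (k : ℝ) * Δ|) - Real.exp (-θ * ((l : ℝ) * Δ + (k : ℝ) * Δ))) / (2 * θ)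

/-- distance of naturals -/
def nd (k l : ℕ) : ℕ := (k - l) + (l - k)

lemma nd_cast (k l : ℕ) (Δ : ℝ) (hΔ : 0 < Δ) : |(l : ℝ) * Δ - (k : ℝ) * Δ| = (nd k l : ℝ) * Δ := by
  rw [← sub_mul, abs_mul, abs_of_pos hΔ]
  congr 1
  unfold nd
  rcases le_total k l with h | h
  · rw [Nat.sub_eq_zero_of_le h, zero_add, Nat.cast_sub h, abs_of_nonneg]
    have : (k : ℝ) ≤ l := by exact_mod_cast h
    linarith
  · rw [Nat.sub_eq_zero_of_le h, add_zero, Nat.cast_sub h, abs_of_nonpos]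
    · ring
    have : (l : ℝ) ≤ k := by exact_mod_cast h
    linarith

lemma rr_eq (θ Δ : ℝ) (hΔ : 0 < Δ) (k l : ℕ) :
    rr θ Δ k l = (rexp (-θ * Δ) ^ nd k l - rexp (-θ * Δ) ^ (k + l)) / (2 * θ) := by
  unfold rr
  rw [nd_cast k l Δ hΔ, ← Real.exp_nat_mul, ← Real.exp_nat_mul]
  congr 3
  · ring
  · push_cast; ring

lemma geo_le (q : ℝ) (h0 : 0 ≤ q) (h1 : q < 1) (N : ℕ) : ∑ j ∈ range N, q ^ j ≤ 1 / (1 - q) := by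
  have h := geom_sum_mul_neg q N
  rw [le_div_iff₀ (by linarith), h]
  have : 0 ≤ q ^ N := by positivity
  linarith

lemma row_le (q : ℝ) (h0 : 0 ≤ q) (h1 : q < 1) (N k : ℕ) :
    ∑ l ∈ range N, q ^ nd k l ≤ 2 / (1 - q) := by
  calc ∑ l ∈ range N, q ^ nd k l ≤ ∑ l ∈ range (k + N), q ^ nd k l :=
        Finset.sum_le_sum_of_subset_of_nonneg (Finset.range_mono (by omega)) fun _ _ _ => by positivity
    _ = ∑ l ∈ range k, q ^ nd k l + ∑ j ∈ range N, q ^ nd k (k + j) := Finset.sum_range_add _ _ _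
    _ ≤ 1 / (1 - q) + 1 / (1 - q) := by
        refine add_le_add ?_ ?_
        · refine le_trans ?_ (geo_le q h0 h1 k)
          rw [← Finset.sum_range_reflect (fun j => q ^ j)]
          refine Finset.sum_le_sum fun l hl => ?_
          rw [Finset.mem_range] at hl
          refine pow_le_pow_of_le_one h0 h1.le ?_
          unfold nd; omega
        · refine le_trans (le_of_eq ?_) (geo_le q h0 h1 N)
          refine Finset.sum_congr rfl fun j _ => ?_
          congr 1; unfold nd; omega
    _ = _ := by ring

lemma double_sum (q : ℝ) (N : ℕ) :
    (1 - q) ^ 2 * ∑ k ∈ range N, ∑ l ∈ range N, q ^ nd k l = N * (1 - q ^ 2) - 2 * q * (1 - q ^ N) := by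
  induction N with
  | zero => simp
  | succ N ih =>
    have hA : ∑ k ∈ range N, q ^ nd k N = q * ∑ j ∈ range N, q ^ j := by
      rw [← Finset.sum_range_reflect (fun j => q ^ j), Finset.mul_sum]
      refine Finset.sum_congr rfl fun l hl => ?_
      rw [Finset.mem_range] at hl
      rw [← pow_succ']
      congr 1; unfold nd; omega
    have hB : ∑ k ∈ range N, q ^ nd N k = q * ∑ j ∈ range N, q ^ j := by
      rw [← hA]
      refine Finset.sum_congr rfl fun l hl => ?_
      congr 1; unfold nd; omega
    have hC : nd N N = 0 := by unfold nd; omega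
    have hg := geom_sum_mul_neg q N
    simp_rw [Finset.sum_range_succ _ N]
    rw [Finset.sum_add_distrib, hA, hB, hC]
    push_cast
    linear_combination ih + 2 * q * (1 - q) * hg

lemma one_sub_exp_ge (u : ℝ) (hu : 0 ≤ u) : u ≤ (1 - rexp (-u)) * (1 + u) := by
  have h1 := Real.add_one_le_exp u
  have h2 : rexp (-u) * (1 + u) ≤ 1 := by
    calc rexp (-u) * (1 + u) ≤ rexp (-u) * rexp u := by
          gcongr; linarith
      _ = 1 := by rw [← Real.exp_add]; simp
  nlinarith

lemma coth_bound (θ Δ : ℝ) (hθ : 0 < θ) (hΔ : 0 < Δ) :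
    |Δ * ((1 + rexp (-(2 * (θ * Δ)))) / (1 - rexp (-(2 * (θ * Δ))))) - 1 / θ| ≤ 2 * Δ := by
  set u := θ * Δ with hu
  have hu0 : 0 < u := by positivity
  set q := rexp (-(2 * u)) with hq
  have hq1 : q < 1 := by rw [hq, Real.exp_lt_one_iff]; linarith
  have hq0 : 0 < q := Real.exp_pos _
  have h1 : 1 - 2 * u ≤ q := by have := Real.add_one_le_exp (-(2 * u)); linarith
  have h2 := one_sub_exp_ge (2 * u) (by linarith)
  rw [← hq] at h2
  have e : Δ * ((1 + q) / (1 - q)) - 1 / θ = (u * (1 + q) / (1 - q) - 1) / θ := by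
    have : 1 - q ≠ 0 := by linarith
    rw [hu]; field_simp
  rw [e, abs_div, abs_of_pos hθ, div_le_iff₀ hθ]
  have hq2 : 0 < 1 - q := by linarith
  rw [show 2 * Δ * θ = 2 * u by rw [hu]; ring]
  have e2 : u * (1 + q) / (1 - q) - 1 = (u * (1 + q) - (1 - q)) / (1 - q) := by field_simp
  rw [e2, abs_div, abs_of_pos hq2, div_le_iff₀ hq2, abs_le]
  constructor <;> nlinarith

lemma S_bound (θ Δ : ℝ) (hθ : 0 < θ) (hΔ : 0 < Δ) (hΔ1 : Δ ≤ 1) (N : ℕ) (hN : 0 < N) :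
    |Δ ^ 2 / (N * Δ) * (∑ k ∈ range N, ∑ l ∈ range N, rr θ Δ k l * rr θ Δ k l) - 1 / (4 * θ ^ 3)|
      ≤ ((1 + θ) / θ) ^ 2 / θ ^ 2 / (N * Δ) + Δ / (2 * θ ^ 2) := by
  have hN' : (0 : ℝ) < N := by exact_mod_cast hN
  set ρ := rexp (-θ * Δ) with hρ
  have hρ0 : 0 < ρ := Real.exp_pos _
  have hρ1 : ρ < 1 := by rw [hρ, Real.exp_lt_one_iff]; nlinarith
  set q := ρ ^ 2 with hq
  have hqe : rexp (-(2 * (θ * Δ))) = q := by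
    rw [hq, hρ, ← Real.exp_nat_mul]; congr 1; push_cast; ring
  have hq0 : 0 < q := by positivity
  have hqρ : q ≤ ρ := by nlinarith
  have hq1 : q < 1 := by linarith
  have hco := coth_bound θ Δ hθ hΔ
  rw [hqe] at hco
  have hρΔ : Δ / (1 - ρ) ≤ (1 + θ) / θ := by
    have h := one_sub_exp_ge (θ * Δ) (by positivity)
    rw [show -(θ * Δ) = -θ * Δ by ring, ← hρ] at h
    rw [div_le_div_iff₀ (by linarith) hθ]
    nlinarith [mul_pos hθ (sub_pos.2 hρ1)]
  set D := ∑ k ∈ range N, ∑ l ∈ range N, q ^ nd k l with hD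
  have hds := double_sum q N
  rw [← hD] at hds
  -- step 1
  have s1 : |(∑ k ∈ range N, ∑ l ∈ range N, rr θ Δ k l * rr θ Δ k l) - 1 / (4 * θ ^ 2) * D|
      ≤ 1 / (2 * θ ^ 2) * (1 / (1 - ρ)) ^ 2 := by
    rw [hD, Finset.mul_sum, ← Finset.sum_sub_distrib]
    simp_rw [Finset.mul_sum, ← Finset.sum_sub_distrib]
    have pt : ∀ k l : ℕ, |rr θ Δ k l * rr θ Δ k l - 1 / (4 * θ ^ 2) * q ^ nd k l|
        ≤ 1 / (2 * θ ^ 2) * (ρ ^ k * ρ ^ l) := by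
      intro k l
      rw [rr_eq θ Δ hΔ, ← hρ, hq, pow_right_comm ρ 2 (nd k l), ← pow_add]
      have b0 : 0 ≤ ρ ^ (k + l) := by positivity
      have ba : ρ ^ (k + l) ≤ ρ ^ nd k l := pow_le_pow_of_le_one hρ0.le hρ1.le (by unfold nd; omega)
      have a1 : ρ ^ nd k l ≤ 1 := pow_le_one₀ hρ0.le hρ1.le
      generalize ρ ^ (k + l) = b at *
      generalize ρ ^ nd k l = a at *
      have : (a - b) / (2 * θ) * ((a - b) / (2 * θ)) - 1 / (4 * θ ^ 2) * a ^ 2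
          = 1 / (4 * θ ^ 2) * (-(b * (2 * a - b))) := by field_simp; ring
      rw [this, abs_mul, abs_neg, abs_of_nonneg (by positivity : 0 ≤ 1 / (4 * θ ^ 2)),
        abs_of_nonneg (by nlinarith)]
      have e : 1 / (2 * θ ^ 2) * b = 1 / (4 * θ ^ 2) * (2 * b) := by field_simp; ring
      rw [e]
      exact mul_le_mul_of_nonneg_left (by nlinarith) (by positivity)
    calc |∑ k ∈ range N, ∑ l ∈ range N, (rr θ Δ k l * rr θ Δ k l - 1 / (4 * θ ^ 2) * q ^ nd k l)|
        ≤ ∑ k ∈ range N, ∑ l ∈ range N, 1 / (2 * θ ^ 2) * (ρ ^ k * ρ ^ l) := by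
          refine (Finset.abs_sum_le_sum_abs _ _).trans (Finset.sum_le_sum fun k _ => ?_)
          exact (Finset.abs_sum_le_sum_abs _ _).trans (Finset.sum_le_sum fun l _ => pt k l)
      _ = 1 / (2 * θ ^ 2) * (∑ k ∈ range N, ρ ^ k) ^ 2 := by
          rw [sq (∑ k ∈ range N, ρ ^ k), Finset.sum_mul_sum]; simp_rw [Finset.mul_sum]
      _ ≤ _ := by
          have g0 : 0 ≤ ∑ k ∈ range N, ρ ^ k := Finset.sum_nonneg fun _ _ => by positivity
          have := geo_le ρ hρ0.le hρ1 N
          gcongr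
  -- step 2
  have s2 : |D - N * ((1 + q) / (1 - q))| ≤ 2 * (1 / (1 - ρ)) ^ 2 := by
    have hne : 1 - q ≠ 0 := by linarith
    have e : D - N * ((1 + q) / (1 - q)) = -(2 * q * (1 - q ^ N)) * (1 / (1 - q)) ^ 2 := by
      field_simp
      linear_combination hds
    have qN : q ^ N ≤ 1 := pow_le_one₀ hq0.le hq1.le
    have qN0 : 0 ≤ q ^ N := by positivity
    have n1 : 0 ≤ 2 * q * (1 - q ^ N) := mul_nonneg (by positivity) (by linarith)
    rw [e, abs_mul, abs_neg, abs_of_nonneg n1, abs_of_nonneg (by positivity)]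
    have n2 : 2 * q * (1 - q ^ N) ≤ 2 := by nlinarith
    have n3 : 1 / (1 - q) ≤ 1 / (1 - ρ) := by
      apply one_div_le_one_div_of_le <;> linarith
    have n4 : 0 ≤ 1 / (1 - q) := by
      apply one_div_nonneg.2; linarith
    gcongr
  set S := ∑ k ∈ range N, ∑ l ∈ range N, rr θ Δ k l * rr θ Δ k l with hS
  set c := Δ * ((1 + q) / (1 - q)) with hc
  have split : Δ ^ 2 / (N * Δ) * S - 1 / (4 * θ ^ 3)
      = Δ ^ 2 / (N * Δ) * (S - 1 / (4 * θ ^ 2) * D)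
        + Δ ^ 2 / (N * Δ) * (1 / (4 * θ ^ 2)) * (D - N * ((1 + q) / (1 - q)))
        + 1 / (4 * θ ^ 2) * (c - 1 / θ) := by
    have : Δ ^ 2 / (N * Δ) * (1 / (4 * θ ^ 2)) * (N * ((1 + q) / (1 - q))) = 1 / (4 * θ ^ 2) * c := by
      rw [hc]; generalize (1 + q) / (1 - q) = t; field_simp
    have h2 : 1 / (4 * θ ^ 2) * (1 / θ) = 1 / (4 * θ ^ 3) := by field_simp
    linear_combination this - h2
  rw [split]
  have p1 : 0 ≤ Δ ^ 2 / (N * Δ) := by positivity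
  have b1 : |Δ ^ 2 / (N * Δ) * (S - 1 / (4 * θ ^ 2) * D)|
      ≤ Δ ^ 2 / (N * Δ) * (1 / (2 * θ ^ 2) * (1 / (1 - ρ)) ^ 2) := by
    rw [abs_mul, abs_of_nonneg p1]; gcongr
  have b2 : |Δ ^ 2 / (N * Δ) * (1 / (4 * θ ^ 2)) * (D - N * ((1 + q) / (1 - q)))|
      ≤ Δ ^ 2 / (N * Δ) * (1 / (4 * θ ^ 2)) * (2 * (1 / (1 - ρ)) ^ 2) := by
    rw [abs_mul, abs_of_nonneg (by positivity : 0 ≤ Δ ^ 2 / (N * Δ) * (1 / (4 * θ ^ 2)))]; gcongr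
  have b3 : |1 / (4 * θ ^ 2) * (c - 1 / θ)| ≤ 1 / (4 * θ ^ 2) * (2 * Δ) := by
    rw [abs_mul, abs_of_nonneg (by positivity : 0 ≤ 1 / (4 * θ ^ 2))]; gcongr
  have b4 : Δ ^ 2 / (N * Δ) * (1 / (2 * θ ^ 2) * (1 / (1 - ρ)) ^ 2)
      + Δ ^ 2 / (N * Δ) * (1 / (4 * θ ^ 2)) * (2 * (1 / (1 - ρ)) ^ 2)
      = (Δ / (1 - ρ)) ^ 2 / θ ^ 2 / (N * Δ) := by
    have : 1 - ρ ≠ 0 := by linarith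
    field_simp; ring
  have b5 : (Δ / (1 - ρ)) ^ 2 / θ ^ 2 / (N * Δ) ≤ ((1 + θ) / θ) ^ 2 / θ ^ 2 / (N * Δ) := by
    have : 0 ≤ Δ / (1 - ρ) := div_nonneg hΔ.le (by linarith)
    gcongr
  have b6 : 1 / (4 * θ ^ 2) * (2 * Δ) = Δ / (2 * θ ^ 2) := by field_simp; ring
  have t1 := abs_add_le (Δ ^ 2 / (N * Δ) * (S - 1 / (4 * θ ^ 2) * D)
        + Δ ^ 2 / (N * Δ) * (1 / (4 * θ ^ 2)) * (D - N * ((1 + q) / (1 - q)))) (1 / (4 * θ ^ 2) * (c - 1 / θ))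
  have t2 := abs_add_le (Δ ^ 2 / (N * Δ) * (S - 1 / (4 * θ ^ 2) * D))
    (Δ ^ 2 / (N * Δ) * (1 / (4 * θ ^ 2)) * (D - N * ((1 + q) / (1 - q))))
  linarith

lemma rr_props (θ Δ : ℝ) (hθ : 0 < θ) (hΔ : 0 < Δ) (hΔ1 : Δ ≤ 1) :
    (∀ k l, 0 ≤ rr θ Δ k l) ∧ (∀ k l, rr θ Δ k l ≤ 1 / (2 * θ)) ∧
    (∀ N k, ∑ l ∈ range N, rr θ Δ k l ≤ (1 + θ) / θ ^ 2 / Δ) := by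
  set ρ := rexp (-θ * Δ) with hρ
  have hρ0 : 0 < ρ := Real.exp_pos _
  have hρ1 : ρ < 1 := by rw [hρ, Real.exp_lt_one_iff]; nlinarith
  have up : ∀ k l, rr θ Δ k l ≤ ρ ^ nd k l / (2 * θ) := by
    intro k l
    rw [rr_eq θ Δ hΔ, ← hρ]
    have : 0 ≤ ρ ^ (k + l) := by positivity
    gcongr; linarith
  refine ⟨fun k l => ?_, fun k l => (up k l).trans ?_, fun N k => ?_⟩
  · rw [rr_eq θ Δ hΔ, ← hρ]
    have ba : ρ ^ (k + l) ≤ ρ ^ nd k l := pow_le_pow_of_le_one hρ0.le hρ1.le (by unfold nd; omega)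
    exact div_nonneg (by linarith) (by positivity)
  · have a1 : ρ ^ nd k l ≤ 1 := pow_le_one₀ hρ0.le hρ1.le
    gcongr
  · calc ∑ l ∈ range N, rr θ Δ k l ≤ ∑ l ∈ range N, ρ ^ nd k l / (2 * θ) :=
          Finset.sum_le_sum fun l _ => up k l
      _ = (∑ l ∈ range N, ρ ^ nd k l) / (2 * θ) := by rw [Finset.sum_div]
      _ ≤ (2 / (1 - ρ)) / (2 * θ) := by gcongr; exact row_le ρ hρ0.le hρ1 N k
      _ ≤ _ := by
        have h := one_sub_exp_ge (θ * Δ) (by positivity)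
        rw [show -(θ * Δ) = -θ * Δ by ring, ← hρ] at h
        have h3 : 0 < 1 - ρ := by linarith
        rw [div_div, div_div, div_le_div_iff₀ (by positivity) (by positivity)]
        have h4 : θ * Δ ≤ (1 - ρ) * (1 + θ) := by nlinarith [mul_pos hθ h3]
        nlinarith [mul_le_mul_of_nonneg_left h4 hθ.le]

lemma ou_gvec {Ω : Type} [MeasureSpace Ω] {θ : ℝ} {X : Fin 2 → ℝ → Ω → ℝ} (hX : IsOUPair θ X) (i : Fin 2)
    (n : ℕ) (Δ : ℝ) (hΔ : 0 < Δ) :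
    GVec (ℙ : Measure Ω) (fun (k : Fin n) ω => X i ((k : ℕ) * Δ) ω)
      (fun k l => rr θ Δ (k : ℕ) (l : ℕ)) where
  meas k := hX.meas i _
  gauss c := hX.gaussian i n (fun k => (k : ℕ) * Δ) c (fun k => by positivity)
  cov k l := hX.cov i _ _ (by positivity) (by positivity)

lemma ou_indep {Ω : Type} [MeasureSpace Ω] {θ : ℝ} {X : Fin 2 → ℝ → Ω → ℝ} (hX : IsOUPair θ X)
    (n : ℕ) (Δ : ℝ) :
    IndepFun (fun ω (k : Fin n) => X 0 ((k : ℕ) * Δ) ω) (fun ω (k : Fin n) => X 1 ((k : ℕ) * Δ) ω)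
      (ℙ : Measure Ω) := by
  have m : Measurable (fun (f : ℝ → ℝ) (k : Fin n) => f ((k : ℕ) * Δ)) :=
    measurable_pi_lambda _ fun k => measurable_pi_apply _
  exact hX.indep.comp m m

lemma ou_repr {Ω : Type} [MeasureSpace Ω] (X : Fin 2 → ℝ → Ω → ℝ) (n : ℕ) (hn : 0 < n) (Δ : ℝ) (ω : Ω) :
    ouYtilde X 0 1 n Δ ω / Real.sqrt ((n : ℝ) * Δ)
      = ∑ k : Fin n, (Δ / √(n * Δ) * GVec.cen (fun j : Fin n => X 1 ((j : ℕ) * Δ) ω) k)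
          * X 0 ((k : ℕ) * Δ) ω := by
  have hn' : (n : ℝ) ≠ 0 := by positivity
  unfold ouYtilde ouXtilde GVec.cen
  rw [Finset.sum_range, Finset.sum_range, Finset.sum_range, ← Finset.mul_sum]
  simp_rw [mul_sub, sub_mul, Finset.sum_sub_distrib]
  rw [sub_div]
  congr 1
  · rw [Finset.mul_sum, Finset.sum_div]
    refine Finset.sum_congr rfl fun k _ => by ring
  · rw [← Finset.mul_sum]
    field_simp

lemma ou_main (θ : ℝ) (hθ : 0 < θ) {Ω : Type} [MeasureSpace Ω] [IsProbabilityMeasure (ℙ : Measure Ω)]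
    (X : Fin 2 → ℝ → Ω → ℝ) (hX : IsOUPair θ X) :
    ∃ C : ℝ, 0 < C ∧ ∀ (n : ℕ) (Δ : ℝ), 0 < Δ → Δ ≤ 1 → 1 ≤ (n : ℝ) * Δ →
      dKol (Measure.map (fun ω => ouYtilde X 0 1 n Δ ω / Real.sqrt ((n : ℝ) * Δ)) ℙ)
          (gaussianReal 0 (Real.toNNReal (1 / (4 * θ ^ 3)))) ≤ C * (1 / √((n : ℝ) * Δ) + Δ) := by
  set w := Real.toNNReal (1 / (4 * θ ^ 3)) with hw
  have hwp : (0 : ℝ) < 1 / (4 * θ ^ 3) := by positivity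
  have hw0 : w ≠ 0 := by rw [hw]; exact (Real.toNNReal_pos.2 hwp).ne'
  have hwc : (w : ℝ) = 1 / (4 * θ ^ 3) := Real.coe_toNNReal _ hwp.le
  set κ := (1 + θ) / θ ^ 2 with hκ
  have hκ0 : 0 < κ := by positivity
  set B := 1 / (2 * θ) with hB
  have hB0 : 0 < B := by positivity
  set E := √(2 * (B * κ ^ 3)) + 3 * κ ^ 2 + ((1 + θ) / θ) ^ 2 / θ ^ 2 + 1 / (2 * θ ^ 2) with hE
  have hE0 : 0 < E := by positivity
  refine ⟨2 / (w : ℝ) * E, by rw [hwc]; positivity, fun n Δ hΔ hΔ1 hT => ?_⟩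
  set T := (n : ℝ) * Δ with hTdef
  have hT0 : 0 < T := by linarith
  have hn : 0 < n := by
    rcases Nat.eq_zero_or_pos n with h | h
    · rw [hTdef, h] at hT; simp at hT; linarith
    · exact h
  have hn' : (0 : ℝ) < n := by exact_mod_cast hn
  have sT : 0 < √T := Real.sqrt_pos.2 hT0
  have sT2 : √T ^ 2 = T := Real.sq_sqrt hT0.le
  have sT1 : 1 ≤ √T := Real.one_le_sqrt.2 hT
  obtain ⟨hr0, hrB, hrK⟩ := rr_props θ Δ hθ hΔ hΔ1
  have gx := ou_gvec hX 0 n Δ hΔ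
  have gy := ou_gvec hX 1 n Δ hΔ
  set r : Fin n → Fin n → ℝ := fun k l => rr θ Δ (k : ℕ) (l : ℕ) with hr
  have hK : ∀ i : Fin n, ∑ j, r i j ≤ κ / Δ := by
    intro i
    have := hrK n i
    rwa [Finset.sum_range] at this
  obtain ⟨ci, cb⟩ := gy.cen_L1 hn B (κ / Δ) (fun i j => hr0 _ _) (fun i j => hrB _ _) hK (by positivity) hB0.le
  have hS := S_bound θ Δ hθ hΔ hΔ1 n hn
  simp_rw [Finset.sum_range] at hS
  rw [← hTdef] at hS
  change |Δ ^ 2 / T * (∑ k, ∑ l, r k l * r k l) - 1 / (4 * θ ^ 3)| ≤ _ at hS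
  set S := ∑ k, ∑ l, r k l * r k l with hSdef
  set V : Ω → ℝ := fun ω => ∑ k, ∑ l, GVec.cen (fun i : Fin n => X 1 ((i : ℕ) * Δ) ω) k
    * GVec.cen (fun i : Fin n => X 1 ((i : ℕ) * Δ) ω) l * r k l with hV
  set C : (Fin n → ℝ) → Fin n → ℝ := fun v k => Δ / √T * GVec.cen v k with hC
  have eV : ∀ ω, (∑ k, ∑ l, C (fun i : Fin n => X 1 ((i : ℕ) * Δ) ω) k
      * C (fun i : Fin n => X 1 ((i : ℕ) * Δ) ω) l * r k l) = Δ ^ 2 / T * V ω := by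
    intro ω
    simp only [hC, hV]
    simp_rw [Finset.mul_sum]
    refine Finset.sum_congr rfl fun k _ => Finset.sum_congr rfl fun l _ => ?_
    have e0 : Δ ^ 2 / T = Δ / √T * (Δ / √T) := by
      rw [div_mul_div_comm, ← sq, ← sq, sT2]
    rw [e0]; ring
  have hCm : ∀ i, Measurable fun v => C v i := by
    intro i
    simp only [hC, GVec.cen]
    fun_prop
  have iV : Integrable (fun ω => Δ ^ 2 / T * V ω) (ℙ : Measure Ω) := ci.const_mul _
  have L1 : ∫ ω, |Δ ^ 2 / T * V ω - w| ∂(ℙ : Measure Ω) ≤ E * (1 / √T + Δ) := by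
    have p1 : 0 ≤ Δ ^ 2 / T := by positivity
    have iVS : Integrable (fun ω => |V ω - S|) (ℙ : Measure Ω) := (ci.sub (integrable_const S)).abs
    have iVS' : Integrable (fun ω => Δ ^ 2 / T * |V ω - S|) (ℙ : Measure Ω) := iVS.const_mul _
    have a1 : ∫ ω, |Δ ^ 2 / T * V ω - w| ∂(ℙ : Measure Ω)
        ≤ ∫ ω, (Δ ^ 2 / T * |V ω - S| + |Δ ^ 2 / T * S - w|) ∂(ℙ : Measure Ω) := by
      refine integral_mono (iV.sub (integrable_const _)).abs (iVS'.add (integrable_const _)) fun ω => ?_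
      have : Δ ^ 2 / T * V ω - w = Δ ^ 2 / T * (V ω - S) + (Δ ^ 2 / T * S - w) := by ring
      simp only
      rw [this]
      refine (abs_add_le _ _).trans (le_of_eq ?_)
      rw [abs_mul, abs_of_nonneg p1]
    rw [integral_add iVS' (integrable_const _), integral_const_mul] at a1
    simp only [integral_const, probReal_univ, one_smul] at a1
    rw [← hwc] at hS
    have a2 : Δ ^ 2 / T * ∫ ω, |V ω - S| ∂(ℙ : Measure Ω)
        ≤ Δ ^ 2 / T * (√(2 * (B * n * (κ / Δ) ^ 3)) + 3 * (κ / Δ) ^ 2) :=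
      mul_le_mul_of_nonneg_left cb p1
    have a3 : Δ ^ 2 / T * √(2 * (B * n * (κ / Δ) ^ 3)) = √(2 * (B * κ ^ 3)) * (1 / √T) := by
      have : 2 * (B * n * (κ / Δ) ^ 3) = (2 * (B * κ ^ 3)) * (√T / Δ ^ 2) ^ 2 := by
        rw [div_pow (√T), sT2, hTdef]; field_simp
      rw [this, Real.sqrt_mul (by positivity), Real.sqrt_sq (by positivity)]
      nth_rewrite 1 [← sT2]
      field_simp
    have a4 : Δ ^ 2 / T * (3 * (κ / Δ) ^ 2) = 3 * κ ^ 2 * (1 / T) := by field_simp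
    have a5 : 1 / T ≤ 1 / √T := by
      apply one_div_le_one_div_of_le sT
      nlinarith
    have a6 : ((1 + θ) / θ) ^ 2 / θ ^ 2 / T = ((1 + θ) / θ) ^ 2 / θ ^ 2 * (1 / T) := by ring
    have a7 : Δ / (2 * θ ^ 2) = 1 / (2 * θ ^ 2) * Δ := by ring
    have c1 : 3 * κ ^ 2 * (1 / T) ≤ 3 * κ ^ 2 * (1 / √T) := by gcongr
    have c2 : ((1 + θ) / θ) ^ 2 / θ ^ 2 * (1 / T) ≤ ((1 + θ) / θ) ^ 2 / θ ^ 2 * (1 / √T) := by gcongr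
    have d1 : 0 ≤ (√(2 * (B * κ ^ 3)) + 3 * κ ^ 2 + ((1 + θ) / θ) ^ 2 / θ ^ 2) * Δ := by positivity
    have d2 : 0 ≤ 1 / (2 * θ ^ 2) * (1 / √T) := by positivity
    have d3 : E * (1 / √T + Δ) = √(2 * (B * κ ^ 3)) * (1 / √T) + 3 * κ ^ 2 * (1 / √T)
        + ((1 + θ) / θ) ^ 2 / θ ^ 2 * (1 / √T) + 1 / (2 * θ ^ 2) * (1 / √T)
        + (√(2 * (B * κ ^ 3)) + 3 * κ ^ 2 + ((1 + θ) / θ) ^ 2 / θ ^ 2) * Δ + 1 / (2 * θ ^ 2) * Δ := by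
      rw [hE]; ring
    rw [mul_add, a3, a4] at a2
    rw [a6, a7] at hS
    linarith
  refine ciSup_le fun z => ?_
  have key := GVec.cond_bound gx gy (ou_indep hX n Δ) C hCm w hw0 (by simp_rw [eV]; exact iV) z
  simp_rw [eV] at key
  have rep : (fun ω => ouYtilde X 0 1 n Δ ω / √T)
      = fun ω => ∑ k, C (fun i : Fin n => X 1 ((i : ℕ) * Δ) ω) k * X 0 ((k : ℕ) * Δ) ω := by
    funext ω
    exact ou_repr X n hn Δ ω
  rw [rep]
  refine key.trans ?_
  rw [mul_assoc]
  exact mul_le_mul_of_nonneg_left L1 (by positivity)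

/-- if `Δₙ → 0` and `nΔₙ → ∞`, there are `c(θ) > 0` and `n₀` such that
for `n ≥ n₀`, `d_Kol(Ỹ₁₂(n)/√Tₙ, N(0,1/(4θ³))) ≤ c(θ)·ln(nΔₙ)·max((nΔₙ)^{−1/2}, (nΔₙ²)^{1/3})`;
in particular if additionally `nΔₙ² → 0` then `Ỹ₁₂(n)/√Tₙ ⇒ N(0,1/(4θ³))`. -/
theorem stmt_13 (θ : ℝ) (hθ : 0 < θ) [IsProbabilityMeasure (ℙ : Measure Ω)]
    (X : Fin 2 → ℝ → Ω → ℝ) (hX : IsOUPair θ X)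
    (Δ : ℕ → ℝ) (hΔpos : ∀ n, 0 < Δ n) (hΔ0 : Tendsto Δ atTop (𝓝 0))
    (hT : Tendsto (fun n : ℕ => (n : ℝ) * Δ n) atTop atTop) :
    (∃ c : ℝ, 0 < c ∧ ∃ n₀ : ℕ, ∀ n : ℕ, n₀ ≤ n →
      dKol (Measure.map (fun ω => ouYtilde X 0 1 n (Δ n) ω / Real.sqrt ((n : ℝ) * Δ n)) ℙ)
          (gaussianReal 0 (Real.toNNReal (1 / (4 * θ ^ 3))))
        ≤ c * Real.log ((n : ℝ) * Δ n)
            * max (1 / Real.sqrt ((n : ℝ) * Δ n)) (((n : ℝ) * (Δ n) ^ 2) ^ ((1 : ℝ) / 3))) ∧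
    (Tendsto (fun n : ℕ => (n : ℝ) * (Δ n) ^ 2) atTop (𝓝 0) →
      Tendsto (fun n : ℕ =>
          dKol (Measure.map (fun ω => ouYtilde X 0 1 n (Δ n) ω / Real.sqrt ((n : ℝ) * Δ n)) ℙ)
            (gaussianReal 0 (Real.toNNReal (1 / (4 * θ ^ 3))))) atTop (𝓝 0)) := by
  obtain ⟨C, hC, hmain⟩ := ou_main θ hθ X hX
  have ev1 : ∀ᶠ n in atTop, Δ n ≤ 1 := hΔ0.eventually (eventually_le_nhds zero_lt_one)
  have ev2 : ∀ᶠ n : ℕ in atTop, rexp 1 ≤ (n : ℝ) * Δ n := hT.eventually_ge_atTop _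
  have e1 : (1 : ℝ) ≤ rexp 1 := Real.one_le_exp zero_le_one
  refine ⟨⟨2 * C, by positivity, ?_⟩, fun _ => ?_⟩
  · obtain ⟨n₀, h⟩ := eventually_atTop.1 (ev1.and ev2)
    refine ⟨max n₀ 1, fun n hn => ?_⟩
    obtain ⟨h1, h2⟩ := h n (le_trans (le_max_left _ _) hn)
    have hn1 : (1 : ℝ) ≤ n := by exact_mod_cast le_trans (le_max_right _ _) hn
    refine (hmain n (Δ n) (hΔpos n) h1 (e1.trans h2)).trans ?_
    have hlog : 1 ≤ Real.log ((n : ℝ) * Δ n) := by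
      rw [Real.le_log_iff_exp_le (by linarith [Real.exp_pos 1])]; exact h2
    have hd := hΔpos n
    have hcube : Δ n ≤ ((n : ℝ) * (Δ n) ^ 2) ^ ((1 : ℝ) / 3) := by
      have e : Δ n = ((Δ n) ^ (3 : ℕ)) ^ ((1 : ℝ) / 3) := by
        rw [← Real.rpow_natCast, ← Real.rpow_mul hd.le]; norm_num
      nth_rewrite 1 [e]
      refine Real.rpow_le_rpow (by positivity) ?_ (by norm_num)
      nlinarith [sq_nonneg (Δ n)]
    set M := max (1 / √((n : ℝ) * Δ n)) (((n : ℝ) * (Δ n) ^ 2) ^ ((1 : ℝ) / 3)) with hM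
    have m1 : 1 / √((n : ℝ) * Δ n) ≤ M := le_max_left _ _
    have m2 : Δ n ≤ M := hcube.trans (le_max_right _ _)
    have m0 : 0 ≤ C * M := mul_nonneg hC.le (hd.le.trans m2)
    calc C * (1 / √((n : ℝ) * Δ n) + Δ n) ≤ C * (M + M) := by gcongr
      _ = 2 * (C * M) * 1 := by ring
      _ ≤ 2 * (C * M) * Real.log ((n : ℝ) * Δ n) := by gcongr
      _ = _ := by ring
  · have lim : Tendsto (fun n : ℕ => C * (1 / √((n : ℝ) * Δ n) + Δ n)) atTop (𝓝 0) := by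
      have t1 : Tendsto (fun n : ℕ => 1 / √((n : ℝ) * Δ n)) atTop (𝓝 0) := by
        simp_rw [one_div]
        exact tendsto_inv_atTop_zero.comp (Real.tendsto_sqrt_atTop.comp hT)
      simpa using (t1.add hΔ0).const_mul C
    refine squeeze_zero' (Eventually.of_forall fun n => ?_) ?_ lim
    · exact Real.iSup_nonneg fun z => abs_nonneg _
    · filter_upwards [ev1, ev2] with n h1 h2
      exact hmain n (Δ n) (hΔpos n) h1 (e1.trans h2)


end
end

section
/- Let (Δₙ)_{n≥1} be a sequence of positive meshes with Δₙ → 0 and nΔₙ → ∞ as n → ∞. For every θ > 0 and every real p ≥ 1 there exist a constant c(p,θ) > 0 and n₀ ∈ ℕ such that for all n ≥ n₀, ( E[ | 2θ·√( (Ỹ₁₁(n)/Tₙ) · (Ỹ₂₂(n)/Tₙ) ) − 1 |^p ] )^{1/p} ≤ c(p,θ) · Tₙ^{−1/2}. -/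
open MeasureTheory ProbabilityTheory Real Filter Finset
open scoped Topology ENNReal NNReal

noncomputable section

variable {Ω : Type} [MeasureSpace Ω]

namespace OUaux

lemma exp_quad_le {y : ℝ} (hy : y ≤ 1/2) : Real.exp (-(y + 2*y^2)) ≤ 1 - y := by
  have h1 : 0 < 1 + (y + 2*y^2) := by nlinarith [sq_nonneg (y + 1/4)]
  have h2 : 1 + (y + 2*y^2) ≤ Real.exp (y + 2*y^2) := by
    have := Real.add_one_le_exp (y + 2*y^2); linarith
  rw [Real.exp_neg]
  have h3 : (1 - y) * (1 + (y + 2*y^2)) ≥ 1 := by nlinarith [mul_nonneg (sq_nonneg y) (by linarith : 0 ≤ 1 - 2*y)]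
  rw [inv_le_iff_one_le_mul₀ (Real.exp_pos _)]
  nlinarith

lemma gauss_exp_sq (v : ℝ≥0) (s : ℝ) (hs : |s * v| ≤ 1/4) :
    Integrable (fun x => Real.exp (s * x^2)) (gaussianReal 0 v) ∧
    ∫ x, Real.exp (s * x^2) ∂(gaussianReal 0 v) ≤ Real.exp (s * v + 4 * (s*v)^2) := by
  by_cases hv : v = 0
  · subst hv
    simp only [gaussianReal_zero_var]
    refine ⟨integrable_dirac (by simp), ?_⟩
    simp
  have hv0 : (0:ℝ) < v := by
    have : 0 < v := pos_iff_ne_zero.mpr hv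
    exact_mod_cast this
  obtain ⟨hs1, hs2⟩ := abs_le.mp hs
  set b : ℝ := (1 - 2 * (s*v)) / (2*v) with hb
  have hb0 : 0 < b := by apply div_pos <;> linarith
  have key : ∀ x : ℝ, gaussianPDFReal 0 v x * Real.exp (s * x^2) = (√(2 * π * v))⁻¹ * Real.exp (-b * x^2) := by
    intro x
    rw [gaussianPDFReal, mul_assoc, ← Real.exp_add]
    congr 2
    rw [hb]; field_simp; ring
  constructor
  · rw [gaussianReal_of_var_ne_zero _ hv, integrable_withDensity_iff_integrable_smul' (by fun_prop) (by simp [gaussianPDF])]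
    refine ((integrable_exp_neg_mul_sq hb0).const_mul (√(2 * π * v))⁻¹).congr ?_
    refine Filter.Eventually.of_forall fun x => ?_
    simp only [smul_eq_mul, toReal_gaussianPDF]
    exact (key x).symm
  · rw [integral_gaussianReal_eq_integral_smul hv]
    simp only [smul_eq_mul, key]
    rw [integral_const_mul, integral_gaussian]
    have e1 : (√(2 * π * v))⁻¹ * √(π / b) = √((1 - 2*(s*v))⁻¹) := by
      rw [← Real.sqrt_inv, ← Real.sqrt_mul (by positivity)]
      congr 1
      rw [hb]
      have : 1 - 2*(s*v) ≠ 0 := by linarith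
      field_simp
    rw [e1]
    have := exp_quad_le (y := 2*(s*v)) (by linarith)
    rw [Real.sqrt_le_left (Real.exp_pos _).le, ← Real.exp_nat_mul]
    apply inv_le_of_inv_le₀ (Real.exp_pos _)
    rw [← Real.exp_neg]
    refine le_trans (le_of_eq ?_) this; congr 1
    push_cast; ring

lemma rpow_le_exp (p : ℝ) (hp : 1 ≤ p) : ∃ K : ℝ, 0 < K ∧ ∀ x : ℝ,
    |x| ^ p ≤ K * (Real.exp x + Real.exp (-x)) := by
  obtain ⟨m, hm⟩ := exists_nat_ge p
  refine ⟨1 + m.factorial, by positivity, fun x => ?_⟩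
  have h1 : |x| ^ p ≤ 1 + |x|^m := by
    rcases le_total |x| 1 with h | h
    · have := Real.rpow_le_one (abs_nonneg x) h (by linarith : 0 ≤ p)
      have : 0 ≤ |x|^m := by positivity
      linarith
    · have := Real.rpow_le_rpow_of_exponent_le h hm
      rw [Real.rpow_natCast] at this
      linarith
  have h2 : |x|^m ≤ m.factorial * Real.exp |x| := by
    have := Real.pow_div_factorial_le_exp |x| (abs_nonneg x) m
    rw [div_le_iff₀ (by positivity)] at this
    linarith
  have h3 : Real.exp |x| ≤ Real.exp x + Real.exp (-x) := by
    rcases abs_cases x with ⟨h, _⟩ | ⟨h, _⟩ <;> rw [h] <;> linarith [Real.exp_pos x, Real.exp_pos (-x)]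
  have h4 : 1 ≤ Real.exp |x| := Real.one_le_exp (abs_nonneg x)
  have h5 : (0:ℝ) < m.factorial := by positivity
  nlinarith

section gen
variable {Ω' : Type} [MeasurableSpace Ω'] {P : Measure Ω'}

lemma quad_exp [IsProbabilityMeasure P] (m : ℕ) (G : Fin m → Ω' → ℝ)
    (hmeas : ∀ k, Measurable (G k))
    (hG : ∀ c : Fin m → ℝ, ∃ v : ℝ≥0, P.map (fun ω => ∑ j, c j * G j ω) = gaussianReal 0 v)
    (F : ℝ) (hF : 0 < F) (hS : ∑ j, ∑ k, (∫ ω, G j ω * G k ω ∂P)^2 ≤ F^2)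
    (s : ℝ) (hs : |s| ≤ 1/(4*F)) :
    Integrable (fun ω => Real.exp (s * (∑ k, (G k ω)^2 - ∑ k, ∫ ω, G k ω * G k ω ∂P))) P ∧
    ∫ ω, Real.exp (s * (∑ k, (G k ω)^2 - ∑ k, ∫ ω, G k ω * G k ω ∂P)) ∂P ≤ Real.exp (1/4) := by
  classical
  have hGm : ∀ c : Fin m → ℝ, Measurable (fun ω => ∑ j, c j * G j ω) := fun c => by fun_prop
  have hL2c : ∀ c : Fin m → ℝ, MemLp (fun ω => ∑ j, c j * G j ω) 2 P := by
    intro c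
    obtain ⟨v, hv⟩ := hG c
    have := (memLp_map_measure_iff (g := (id : ℝ → ℝ)) (p := 2) (by fun_prop) (hGm c).aemeasurable).1
      (by rw [hv]; exact memLp_id_gaussianReal 2)
    exact this
  have hL2 : ∀ k, MemLp (G k) 2 P := by
    intro k
    have := hL2c (Pi.single k 1)
    simpa [Pi.single_apply] using this
  have hprodI : ∀ j k, Integrable (fun ω => G j ω * G k ω) P := fun j k => (hL2 j).integrable_mul (hL2 k)
  set S : Matrix (Fin m) (Fin m) ℝ := Matrix.of (fun j k => ∫ ω, G j ω * G k ω ∂P) with hSdef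
  have hSa : ∀ j k, S j k = ∫ ω, G j ω * G k ω ∂P := fun j k => rfl
  have hH : S.IsHermitian := by
    ext j k
    rw [Matrix.conjTranspose_apply, star_trivial, hSa, hSa]
    simp_rw [mul_comm]
  set u := hH.eigenvectorBasis with hu
  set lam := hH.eigenvalues with hlam
  have hSu : ∀ j k, ∑ l, S k l * u j l = lam j * u j k := by
    intro j k
    have := congrFun (hH.mulVec_eigenvectorBasis j) k
    simpa [Matrix.mulVec, dotProduct] using this
  have huo : ∀ i j, ∑ k, u i k * u j k = if i = j then 1 else 0 := by
    intro i j
    have := orthonormal_iff_ite.mp u.orthonormal i j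
    rw [← this]
    simp [PiLp.inner_apply, mul_comm]
  have hpars : ∀ x : Fin m → ℝ, ∑ j, (∑ k, u j k * x k)^2 = ∑ k, (x k)^2 := by
    intro x
    have := u.sum_sq_inner_right (WithLp.toLp 2 x)
    rw [EuclideanSpace.real_norm_sq_eq] at this
    rw [← this]
    simp [PiLp.inner_apply, mul_comm]
  have hlamsq : ∑ j, lam j ^ 2 ≤ F^2 := by
    have h1 : ∀ j, lam j ^ 2 = ∑ k, (∑ l, u j l * S k l)^2 := by
      intro j
      have : ∀ k, (∑ l, u j l * S k l) = lam j * u j k := by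
        intro k; rw [← hSu]; simp_rw [mul_comm]
      simp_rw [this, mul_pow]
      rw [← Finset.mul_sum]
      have := huo j j
      simp only [if_true, ← sq] at this
      rw [this, mul_one]
    simp_rw [h1]
    rw [Finset.sum_comm]
    simp_rw [hpars]
    exact hS
  set W : Fin m → Ω' → ℝ := fun j ω => ∑ k, u j k * G k ω with hW
  have hWm : ∀ j, Measurable (W j) := fun j => hGm _
  have hWL2 : ∀ j, MemLp (W j) 2 P := fun j => hL2c _
  have hWcov : ∀ i j, ∫ ω, W i ω * W j ω ∂P = if i = j then lam j else 0 := by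
    intro i j
    have e : ∀ ω, W i ω * W j ω = ∑ k, ∑ l, (u i k * u j l) * (G k ω * G l ω) := by
      intro ω
      simp only [hW]
      rw [Finset.sum_mul_sum]
      refine Finset.sum_congr rfl fun k _ => Finset.sum_congr rfl fun l _ => by ring
    simp_rw [e]
    rw [integral_finsetSum _ (fun k _ => integrable_finsetSum _ (fun l _ => (hprodI k l).const_mul _))]
    have e2 : ∀ k, ∫ ω, ∑ l, (u i k * u j l) * (G k ω * G l ω) ∂P = u i k * (lam j * u j k) := by
      intro k
      rw [integral_finsetSum _ (fun l _ => (hprodI k l).const_mul _), ← hSu, Finset.mul_sum]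
      refine Finset.sum_congr rfl fun l _ => ?_
      rw [integral_const_mul]
      rw [hSa]; ring
    simp_rw [e2]
    have : ∀ k, u i k * (lam j * u j k) = lam j * (u i k * u j k) := fun k => by ring
    simp_rw [this]
    rw [← Finset.mul_sum, huo]
    simp
  have hWlaw : ∀ j, ∃ v : ℝ≥0, P.map (W j) = gaussianReal 0 v ∧ (v : ℝ) = lam j := by
    intro j
    obtain ⟨v, hv⟩ := hG (u j)
    refine ⟨v, hv, ?_⟩
    have h1 := hWcov j j
    rw [if_pos rfl] at h1
    rw [← h1]
    have h2 : ∫ ω, W j ω * W j ω ∂P = ∫ x, x * x ∂(P.map (W j)) :=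
      (integral_map (hWm j).aemeasurable (f := fun x : ℝ => x * x) (by fun_prop)).symm
    rw [h2]
    have hv' : P.map (W j) = gaussianReal 0 v := hv
    rw [hv']
    have h3 := variance_id_gaussianReal (μ := 0) (v := v)
    rw [variance_eq_integral (by fun_prop)] at h3
    simp only [id, integral_id_gaussianReal, sub_zero, sq] at h3
    exact h3.symm
  have hWmean : ∀ j, ∫ ω, W j ω ∂P = 0 := by
    intro j
    obtain ⟨v, hv, -⟩ := hWlaw j
    have h2 : ∫ ω, W j ω ∂P = ∫ x, x ∂(P.map (W j)) :=
      (integral_map (hWm j).aemeasurable (f := fun x : ℝ => x) (by fun_prop)).symm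
    rw [h2, hv, integral_id_gaussianReal]
  have hlaw : HasGaussianLaw (fun ω => (W · ω)) P := by
    constructor
    refine isGaussian_of_map_eq_gaussianReal fun L => ?_
    obtain ⟨v, hv⟩ := hG (fun k => ∑ j, L (Pi.single j 1) * u j k)
    refine ⟨0, v, ?_⟩
    rw [Measure.map_map (by fun_prop) (measurable_pi_lambda _ hWm), ← hv]
    congr 1
    ext ω
    simp only [Function.comp]
    have e1 : (fun j => W j ω) = ∑ j, W j ω • (Pi.single j (1:ℝ) : Fin m → ℝ) := by
      ext i; simp [Finset.sum_apply, Pi.single_apply]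
    rw [e1, map_sum]
    simp only [map_smul, smul_eq_mul, hW, Finset.sum_mul]
    rw [Finset.sum_comm]
    refine Finset.sum_congr rfl fun k _ => Finset.sum_congr rfl fun l _ => by ring
  have hind : iIndepFun W P := by
    refine hlaw.iIndepFun_of_covariance_eq_zero fun i j hij => ?_
    rw [covariance_eq_sub (hWL2 i) (hWL2 j)]
    have := hWcov i j
    rw [if_neg hij] at this
    rw [hWmean i, zero_mul, sub_zero]
    exact this
  have hind2 : iIndepFun (fun j ω => (W j ω)^2 - lam j) P :=
    hind.comp (fun j x => x^2 - lam j) (fun j => by fun_prop)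
  have hm2 : ∀ j, Measurable (fun ω => (W j ω)^2 - lam j) := fun j => by
    have := hWm j; fun_prop
  have hsl : ∀ j, |s * lam j| ≤ 1/4 := by
    intro j
    have h1 : lam j ^2 ≤ F^2 := le_trans (Finset.single_le_sum (f := fun j => lam j ^2) (fun i _ => sq_nonneg _) (Finset.mem_univ j)) hlamsq
    have h2 : |lam j| ≤ F := abs_le_of_sq_le_sq h1 hF.le
    rw [abs_mul]
    calc |s| * |lam j| ≤ 1/(4*F) * F := by gcongr
      _ = 1/4 := by field_simp
  have hone : ∀ j, Integrable (fun ω => Real.exp (s * ((W j ω)^2 - lam j))) P ∧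
      ∫ ω, Real.exp (s * ((W j ω)^2 - lam j)) ∂P ≤ Real.exp (4 * (s * lam j)^2) := by
    intro j
    obtain ⟨v, hv, hvl⟩ := hWlaw j
    have hb := hsl j
    rw [← hvl] at hb ⊢
    obtain ⟨i1, i2⟩ := gauss_exp_sq v s hb
    have e : ∀ x : ℝ, Real.exp (s * (x^2 - v)) = Real.exp (-(s * v)) * Real.exp (s * x^2) := by
      intro x; rw [← Real.exp_add]; congr 1; ring
    rw [← hv] at i1 i2
    simp_rw [e]
    have i3 : ∫ ω, Real.exp (s * (W j ω)^2) ∂P ≤ Real.exp (s * v + 4 * (s*v)^2) := by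
      rwa [integral_map (hWm j).aemeasurable (by fun_prop)] at i2
    have i4 : Integrable (fun ω => Real.exp (s * (W j ω)^2)) P :=
      (integrable_map_measure (by fun_prop) (hWm j).aemeasurable).1 i1
    refine ⟨i4.const_mul _, ?_⟩
    rw [integral_const_mul]
    calc _ ≤ Real.exp (-(s * v)) * Real.exp (s * v + 4 * (s*v)^2) := by gcongr
      _ = _ := by rw [← Real.exp_add]; congr 1; ring
  have htr : ∑ k, ∫ ω, G k ω * G k ω ∂P = ∑ j, lam j := by
    have := hH.trace_eq_sum_eigenvalues
    simpa [Matrix.trace, Matrix.diag, hSa] using this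
  have hfun : (fun ω => Real.exp (s * (∑ k, (G k ω)^2 - ∑ k, ∫ ω, G k ω * G k ω ∂P)))
      = fun ω => Real.exp (s * (∑ j, fun ω => (W j ω)^2 - lam j) ω) := by
    ext ω
    rw [htr, Finset.sum_apply, Finset.sum_sub_distrib, ← hpars (fun k => G k ω)]
  rw [hfun]
  refine ⟨hind2.integrable_exp_mul_sum hm2 (fun j _ => (hone j).1), ?_⟩
  have hmgf := hind2.mgf_sum (t := s) hm2 Finset.univ
  have : ∫ ω, Real.exp (s * (∑ j, fun ω => (W j ω)^2 - lam j) ω) ∂P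
     = ∏ j, ∫ ω, Real.exp (s * ((W j ω)^2 - lam j)) ∂P := hmgf
  rw [this]
  calc ∏ j, ∫ ω, Real.exp (s * ((W j ω)^2 - lam j)) ∂P ≤ ∏ j, Real.exp (4 * (s * lam j)^2) :=
        Finset.prod_le_prod (fun j _ => integral_nonneg fun ω => (Real.exp_pos _).le) (fun j _ => (hone j).2)
    _ = Real.exp (4 * s^2 * ∑ j, lam j ^2) := by
        rw [← Real.exp_sum, Finset.mul_sum]; congr 1
        refine Finset.sum_congr rfl fun j _ => by ring
    _ ≤ Real.exp (1/4) := by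
        apply Real.exp_le_exp.mpr
        have h1 : s^2 ≤ (1/(4*F))^2 := by rw [← sq_abs]; gcongr
        calc 4 * s^2 * ∑ j, lam j ^2 ≤ 4 * (1/(4*F))^2 * F^2 := by gcongr
          _ = 1/4 := by field_simp

lemma quad_moment (p : ℝ) (hp : 1 ≤ p) : ∃ K : ℝ, 0 < K ∧
    ∀ (Ω' : Type) [MeasurableSpace Ω'] (P : Measure Ω') [IsProbabilityMeasure P]
    (m : ℕ) (G : Fin m → Ω' → ℝ)
    (_ : ∀ k, Measurable (G k))
    (_ : ∀ c : Fin m → ℝ, ∃ v : ℝ≥0, P.map (fun ω => ∑ j, c j * G j ω) = gaussianReal 0 v)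
    (F : ℝ) (_ : 0 < F) (_ : ∑ j, ∑ k, (∫ ω, G j ω * G k ω ∂P)^2 ≤ F^2),
    Integrable (fun ω => |∑ k, (G k ω)^2 - ∑ k, ∫ ω, G k ω * G k ω ∂P| ^ p) P ∧
    ∫ ω, |∑ k, (G k ω)^2 - ∑ k, ∫ ω, G k ω * G k ω ∂P| ^ p ∂P ≤ K * F ^ p := by
  obtain ⟨K, hK, hb⟩ := rpow_le_exp p hp
  refine ⟨4 ^ p * (K * (2 * Real.exp (1/4))), by positivity, ?_⟩
  intro Ω' _ P _ m G hmeas hG F hF hS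
  have hs1 : |1/(4*F)| ≤ 1/(4*F) := by rw [abs_of_pos (by positivity)]
  have hs2 : |-(1/(4*F))| ≤ 1/(4*F) := by rw [abs_neg]; exact hs1
  obtain ⟨a1, a2⟩ := quad_exp m G hmeas hG F hF hS _ hs1
  obtain ⟨b1, b2⟩ := quad_exp m G hmeas hG F hF hS _ hs2
  set Q : Ω' → ℝ := fun ω => ∑ k, (G k ω)^2 - ∑ k, ∫ ω, G k ω * G k ω ∂P with hQ
  have hQm : Measurable Q := by fun_prop
  have key : ∀ ω, |Q ω| ^ p ≤ (4*F)^p * (K * (Real.exp (1/(4*F) * Q ω) + Real.exp (-(1/(4*F)) * Q ω))) := by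
    intro ω
    have h1 := hb (1/(4*F) * Q ω)
    have h2 : |Q ω| = (4*F) * |1/(4*F) * Q ω| := by
      rw [abs_mul, abs_of_pos (by positivity : 0 < 1/(4*F))]; field_simp
    rw [h2, Real.mul_rpow (by positivity) (by positivity), neg_mul]
    gcongr
  have hI : Integrable (fun ω => (4*F)^p * (K * (Real.exp (1/(4*F) * Q ω) + Real.exp (-(1/(4*F)) * Q ω)))) P :=
    ((a1.add b1).const_mul K).const_mul _
  constructor
  · have hQp : Measurable (fun ω => |Q ω| ^ p) := by fun_prop
    refine hI.mono' hQp.aestronglyMeasurable (Filter.Eventually.of_forall fun ω => ?_)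
    rw [Real.norm_of_nonneg (by positivity)]
    exact key ω
  · calc ∫ ω, |Q ω| ^ p ∂P ≤ ∫ ω, (4*F)^p * (K * (Real.exp (1/(4*F) * Q ω) + Real.exp (-(1/(4*F)) * Q ω))) ∂P :=
          integral_mono_of_nonneg (Filter.Eventually.of_forall fun ω => by positivity) hI
            (Filter.Eventually.of_forall key)
      _ = (4*F)^p * (K * (∫ ω, Real.exp (1/(4*F) * Q ω) ∂P + ∫ ω, Real.exp (-(1/(4*F)) * Q ω) ∂P)) := by
          rw [integral_const_mul, integral_const_mul, integral_add a1 b1]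
      _ ≤ (4*F)^p * (K * (Real.exp (1/4) + Real.exp (1/4))) := by gcongr
      _ = _ := by rw [Real.mul_rpow (by positivity) hF.le]; ring

end gen

lemma exp_neg_le {x : ℝ} (h0 : 0 ≤ x) (h1 : x ≤ 1) : x / 2 ≤ 1 - Real.exp (-x) := by
  have h2 := Real.add_one_le_exp x
  have h3 : Real.exp (-x) ≤ 1 - x/2 := by
    rw [Real.exp_neg, inv_le_iff_one_le_mul₀ (Real.exp_pos _)]
    nlinarith
  linarith

lemma geom_le (r : ℝ) (h0 : 0 ≤ r) (h1 : r < 1) (n : ℕ) :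
    ∑ k ∈ Finset.range n, r ^ k ≤ 1 / (1 - r) := by
  have h2 : 0 < 1 - r := by linarith
  rw [le_div_iff₀ h2, geom_sum_mul_neg]
  have : 0 ≤ r ^ n := by positivity
  linarith

/-- bound on the double sum of a symmetric, exponentially decaying kernel -/
lemma dsum_le (r : ℝ) (h0 : 0 ≤ r) (h1 : r < 1) (f : ℕ → ℕ → ℝ)
    (hf : ∀ j k, j ≤ k → f j k ≤ r ^ (k - j)) (hf' : ∀ j k, j ≤ k → f k j ≤ r ^ (k - j)) (n : ℕ) :
    ∑ j ∈ Finset.range n, ∑ k ∈ Finset.range n, f j k ≤ n * (2 / (1 - r)) := by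
  have hr : ∀ n, ∑ k ∈ Finset.range (n+1), r ^ (n - k) ≤ 1 / (1 - r) := by
    intro n
    have := Finset.sum_range_reflect (fun k => r ^ k) (n+1)
    simp only [Nat.add_sub_cancel] at this
    rw [this]
    exact geom_le r h0 h1 _
  induction n with
  | zero => simp
  | succ n ih =>
    have e : ∑ j ∈ Finset.range (n+1), ∑ k ∈ Finset.range (n+1), f j k
        = ∑ j ∈ Finset.range n, ∑ k ∈ Finset.range n, f j k
          + (∑ j ∈ Finset.range n, f j n) + ∑ k ∈ Finset.range (n+1), f n k := by
      rw [Finset.sum_range_succ]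
      simp_rw [Finset.sum_range_succ _ n]
      rw [Finset.sum_add_distrib]
    rw [e]
    have b1 : ∑ k ∈ Finset.range (n+1), f n k ≤ 1 / (1 - r) :=
      le_trans (Finset.sum_le_sum fun k hk => hf' k n (by simp at hk; omega)) (hr n)
    have b2 : ∑ j ∈ Finset.range n, f j n ≤ 1 / (1 - r) := by
      refine le_trans (le_trans (Finset.sum_le_sum fun k hk => hf k n (by simp at hk; omega)) ?_) (hr n)
      exact Finset.sum_le_sum_of_subset_of_nonneg (Finset.range_mono (by omega)) (fun _ _ _ => by positivity)
    push_cast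
    have : 2 / (1 - r) = 1/(1-r) + 1/(1-r) := by ring
    nlinarith

lemma ab_sqrt {a b : ℝ} (ha : 0 ≤ a) (hb : 0 ≤ b) : |√(a*b) - 1| ≤ max |a - 1| |b - 1| := by
  wlog hab : a ≤ b generalizing a b
  · rw [mul_comm, max_comm]; exact this hb ha (by linarith)
  have h1 : a ≤ √(a*b) := Real.le_sqrt_of_sq_le (by nlinarith)
  have h2 : √(a*b) ≤ b := by
    rw [Real.sqrt_le_left hb]; nlinarith
  rw [abs_le]
  constructor
  · have := le_max_left |a-1| |b-1|
    have := neg_abs_le (a-1)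
    linarith
  · have := le_max_right |a-1| |b-1|
    have := le_abs_self (b-1)
    linarith

lemma Ytilde_eq (X : Fin 2 → ℝ → Ω → ℝ) (i : Fin 2) (n : ℕ) (hn : 1 ≤ n) (D : ℝ) (hD : 0 < D) (ω : Ω) :
    ouYtilde X i i n D ω / (n * D)
     = (1/n) * ∑ k ∈ Finset.range n, (X i (k * D) ω)^2 - (ouXtilde X i n D ω)^2 := by
  have : (0:ℝ) < n := by exact_mod_cast hn
  unfold ouYtilde
  simp_rw [sq]
  field_simp

lemma Ytilde_nonneg (X : Fin 2 → ℝ → Ω → ℝ) (i : Fin 2) (n : ℕ) (hn : 1 ≤ n) (D : ℝ) (hD : 0 < D) (ω : Ω) :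
    0 ≤ ouYtilde X i i n D ω / (n * D) := by
  have hn' : (0:ℝ) < n := by exact_mod_cast hn
  rw [Ytilde_eq X i n hn D hD]
  unfold ouXtilde
  have := sq_sum_le_card_mul_sum_sq (s := Finset.range n) (f := fun k : ℕ => X i (k * D) ω)
  rw [Finset.card_range] at this
  rw [sub_nonneg, mul_pow]
  calc (1/(n:ℝ))^2 * (∑ k ∈ Finset.range n, X i (k * D) ω)^2
      ≤ (1/(n:ℝ))^2 * (n * ∑ k ∈ Finset.range n, (X i (k * D) ω)^2) := by gcongr
    _ = _ := by rw [← mul_assoc]; congr 1; field_simp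

set_option maxHeartbeats 4000000 in
lemma one_dim (θ : ℝ) (hθ : 0 < θ) (p : ℝ) (hp : 1 ≤ p)
    [IsProbabilityMeasure (ℙ : Measure Ω)]
    (X : Fin 2 → ℝ → Ω → ℝ) (hX : IsOUPair θ X) :
    ∃ M : ℝ, 0 < M ∧ ∀ (i : Fin 2) (n : ℕ) (D : ℝ), 1 ≤ n → 0 < D → θ * D ≤ 1 → 1 ≤ n * D →
      Integrable (fun ω => |2 * θ * (ouYtilde X i i n D ω / (n * D)) - 1| ^ p) ℙ ∧
      ∫ ω, |2 * θ * (ouYtilde X i i n D ω / (n * D)) - 1| ^ p ∂ℙ ≤ M * (1 / √(n * D)) ^ p := by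
  obtain ⟨K, hK, hquad⟩ := quad_moment p hp
  refine ⟨3 ^ (p-1) * (K * (2 / √θ) ^ p + K * (4 / θ) ^ p + (6 / θ) ^ p), by positivity, ?_⟩
  intro i n D hn hD hθD hT
  have hn' : (0:ℝ) < n := by exact_mod_cast hn
  have hT0 : 0 < n * D := by positivity
  have hsT : 1 / (n * D) ≤ 1 / √(n * D) := by
    apply one_div_le_one_div_of_le (by positivity)
    rw [Real.sqrt_le_left hT0.le]; nlinarith
  set r := Real.exp (-(θ * D)) with hr
  have hr0 : 0 ≤ r := (Real.exp_pos _).le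
  have hrb : θ * D / 2 ≤ 1 - r := exp_neg_le (by positivity) hθD
  have hθDpos : 0 < θ * D := by positivity
  have hr1 : r < 1 := by linarith
  have hinv : 1 / (1 - r) ≤ 2 / (θ * D) := by
    rw [div_le_div_iff₀ (by linarith) hθDpos]; linarith
  -- covariance
  set c : ℕ → ℕ → ℝ := fun j k => ∫ ω, X i (j * D) ω * X i (k * D) ω ∂ℙ with hc
  have hcv : ∀ j k : ℕ, c j k = (Real.exp (-θ * |(k:ℝ) * D - j * D|) - Real.exp (-θ * (k * D + j * D))) / (2*θ) :=
    fun j k => hX.cov i _ _ (by positivity) (by positivity)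
  have hcs : ∀ j k, c j k = c k j := by
    intro j k; simp only [hc]; simp_rw [mul_comm]
  have hcpow : ∀ j k : ℕ, j ≤ k → 2 * θ * c j k ≤ r ^ (k - j) ∧ 0 ≤ 2 * θ * c j k := by
    intro j k hjk
    have hjk' : (j:ℝ) ≤ k := by exact_mod_cast hjk
    have e : 2 * θ * c j k = Real.exp (-θ * |(k:ℝ) * D - j * D|) - Real.exp (-θ * (k * D + j * D)) := by
      rw [hcv]; field_simp
    have e2 : Real.exp (-θ * |(k:ℝ) * D - j * D|) = r ^ (k - j) := by
      rw [hr, ← Real.exp_nat_mul, abs_of_nonneg (by nlinarith), Nat.cast_sub hjk]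
      congr 1; ring
    rw [e]
    constructor
    · rw [e2]; linarith [Real.exp_pos (-θ * (k * D + j * D))]
    · rw [sub_nonneg]
      apply Real.exp_le_exp.mpr
      rw [abs_of_nonneg (by nlinarith)]
      have : 0 ≤ θ * (j * D) := by positivity
      nlinarith
  have hc0 : ∀ j k, 0 ≤ 2 * θ * c j k := by
    intro j k
    rcases le_total j k with h | h
    · exact (hcpow j k h).2
    · rw [hcs]; exact (hcpow k j h).2
  have hc1 : ∀ j k, 2 * θ * c j k ≤ 1 := by
    intro j k
    rcases le_total j k with h | h
    · exact (hcpow j k h).1.trans (pow_le_one₀ hr0 hr1.le)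
    · rw [hcs]; exact (hcpow k j h).1.trans (pow_le_one₀ hr0 hr1.le)
  have hdd : ∑ j ∈ Finset.range n, ∑ k ∈ Finset.range n, 2 * θ * c j k ≤ n * (4 / (θ * D)) := by
    refine (dsum_le r hr0 hr1 (fun j k => 2 * θ * c j k) (fun j k h => (hcpow j k h).1)
      (fun j k h => by rw [hcs]; exact (hcpow j k h).1) n).trans ?_
    have : 2 / (1 - r) = 2 * (1 / (1 - r)) := by ring
    rw [this]
    calc (n:ℝ) * (2 * (1 / (1 - r))) ≤ n * (2 * (2 / (θ * D))) := by gcongr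
      _ = _ := by ring
  have hdd1 : ∑ j ∈ Finset.range n, ∑ k ∈ Finset.range n, c j k ≤ 2 * n / (θ^2 * D) := by
    simp_rw [← Finset.mul_sum] at hdd
    have : ∑ j ∈ Finset.range n, ∑ k ∈ Finset.range n, c j k
        = (2 * θ * ∑ j ∈ Finset.range n, ∑ k ∈ Finset.range n, c j k) / (2 * θ) := by field_simp
    rw [this, div_le_iff₀ (by positivity)]
    refine hdd.trans (le_of_eq ?_)
    field_simp; ring
  have hdd2 : ∑ j ∈ Finset.range n, ∑ k ∈ Finset.range n, (c j k)^2 ≤ n / (θ^3 * D) := by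
    have h1 : ∀ j k, (c j k)^2 ≤ 1 / (2 * θ) * c j k := by
      intro j k
      have a := hc0 j k
      have b := hc1 j k
      have a' : 0 ≤ c j k := by
        by_contra h; push Not at h; nlinarith
      have b' : c j k ≤ 1 / (2 * θ) := by rw [le_div_iff₀ (by positivity)]; linarith
      nlinarith
    calc _ ≤ ∑ j ∈ Finset.range n, ∑ k ∈ Finset.range n, 1 / (2 * θ) * c j k :=
          Finset.sum_le_sum fun j _ => Finset.sum_le_sum fun k _ => h1 j k
      _ = 1 / (2 * θ) * ∑ j ∈ Finset.range n, ∑ k ∈ Finset.range n, c j k := by simp_rw [Finset.mul_sum]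
      _ ≤ 1 / (2 * θ) * (2 * n / (θ^2 * D)) := by gcongr
      _ = _ := by field_simp
  have hdd0 : 0 ≤ ∑ j ∈ Finset.range n, ∑ k ∈ Finset.range n, c j k := by
    refine Finset.sum_nonneg fun j _ => Finset.sum_nonneg fun k _ => ?_
    have a := hc0 j k
    by_contra h; push Not at h; nlinarith
  have hL2 : ∀ k : ℕ, MemLp (X i (k * D)) 2 ℙ := by
    intro k
    obtain ⟨v, hv⟩ := hX.gaussian i 1 (fun _ => k * D) (fun _ => 1) (fun _ => by positivity)
    simp only [Finset.univ_unique, one_mul, Finset.sum_const, Finset.card_singleton, one_smul] at hv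
    exact (memLp_map_measure_iff (g := (id : ℝ → ℝ)) (p := 2) (by fun_prop) (hX.meas i _).aemeasurable).1
      (by rw [show Measure.map (X i (k * D)) ℙ = _ from hv]; exact memLp_id_gaussianReal 2)
  have hprodI : ∀ j k : ℕ, Integrable (fun ω => X i (j * D) ω * X i (k * D) ω) ℙ :=
    fun j k => (hL2 j).integrable_mul (hL2 k)
  -- the quadratic form
  obtain ⟨q1, q2⟩ := hquad Ω ℙ n (fun k ω => X i ((k:ℕ) * D) ω) (fun k => hX.meas i _)
    (fun cc => hX.gaussian i n (fun k => (k:ℕ) * D) cc (fun k => by positivity))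
    (n / (θ * √θ * √(n * D))) (by positivity) (by
      have e : (n / (θ * √θ * √(n * D)))^2 = n / (θ^3 * D) := by
        rw [div_pow, mul_pow, mul_pow, Real.sq_sqrt hθ.le, Real.sq_sqrt hT0.le]
        field_simp
      rw [e]
      refine le_trans (le_of_eq ?_) hdd2
      rw [Finset.sum_range]
      refine Finset.sum_congr rfl fun j _ => ?_
      rw [Finset.sum_range])
  -- the mean
  set A : Ω → ℝ := ouXtilde X i n D with hA
  have hAm : Measurable A := by
    have := hX.meas i
    rw [hA]; unfold ouXtilde; fun_prop
  have hAv : ∫ ω, A ω * A ω ∂ℙ = 1 / (n:ℝ)^2 * ∑ j ∈ Finset.range n, ∑ k ∈ Finset.range n, c j k := by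
    have e : ∀ ω, A ω * A ω = 1 / (n:ℝ)^2 * ∑ j ∈ Finset.range n, ∑ k ∈ Finset.range n, X i (j * D) ω * X i (k * D) ω := by
      intro ω
      simp only [hA, ouXtilde]
      rw [← Finset.sum_mul_sum]; ring
    simp_rw [e]
    rw [integral_const_mul, integral_finsetSum _ (fun j _ => integrable_finsetSum _ (fun k _ => hprodI j k))]
    congr 1
    refine Finset.sum_congr rfl fun j _ => ?_
    rw [integral_finsetSum _ (fun k _ => hprodI j k)]
  have hAv0 : 0 ≤ ∫ ω, A ω * A ω ∂ℙ := integral_nonneg fun ω => mul_self_nonneg _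
  have hAv1 : ∫ ω, A ω * A ω ∂ℙ ≤ 2 / (θ^2 * (n * D)) := by
    rw [hAv]
    calc _ ≤ 1 / (n:ℝ)^2 * (2 * n / (θ^2 * D)) := by gcongr
      _ = _ := by field_simp
  obtain ⟨r1, r2⟩ := hquad Ω ℙ 1 (fun _ => A) (fun _ => hAm) (fun cc => by
      obtain ⟨v, hv⟩ := hX.gaussian i n (fun k => (k:ℕ) * D) (fun _ => cc 0 * (1 / n)) (fun k => by positivity)
      refine ⟨v, ?_⟩
      rw [← hv]
      congr 1
      ext ω
      simp only [Finset.univ_unique, Fin.default_eq_zero, Finset.sum_singleton, hA, ouXtilde, ← Finset.mul_sum]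
      rw [Finset.sum_range]; ring)
    (2 / (θ^2 * (n * D))) (by positivity) (by
      simp only [Finset.univ_unique, Finset.sum_singleton]
      gcongr)
  simp only [Finset.univ_unique, Finset.sum_singleton] at r1 r2
  rw [← Finset.sum_range (fun k : ℕ => ∫ ω, X i (k * D) ω * X i (k * D) ω ∂ℙ)] at q1 q2
  have hsum : ∀ ω, ∑ k : Fin n, (X i ((k:ℕ) * D) ω)^2 = ∑ k ∈ Finset.range n, (X i (k * D) ω)^2 :=
    fun ω => (Finset.sum_range (fun k : ℕ => (X i (k * D) ω)^2)).symm
  simp only [hsum] at q1 q2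
  set Q : Ω → ℝ := fun ω => ∑ k ∈ Finset.range n, (X i (k * D) ω)^2
    - ∑ k ∈ Finset.range n, ∫ ω, X i (k * D) ω * X i (k * D) ω ∂ℙ with hQ
  set R : Ω → ℝ := fun ω => (A ω)^2 - ∫ ω, A ω * A ω ∂ℙ with hR
  -- bias
  set d : ℝ := 2 * θ / n * (∑ k ∈ Finset.range n, ∫ ω, X i (k * D) ω * X i (k * D) ω ∂ℙ) - 1
    - 2 * θ * ∫ ω, A ω * A ω ∂ℙ with hd
  have hdb : |d| ≤ 6 / θ * (1 / √(n * D)) := by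
    have e1 : 2 * θ / n * (∑ k ∈ Finset.range n, ∫ ω, X i (k * D) ω * X i (k * D) ω ∂ℙ) - 1
        = - (1 / n * ∑ k ∈ Finset.range n, (r^2)^k) := by
      have : ∀ k : ℕ, ∫ ω, X i (k * D) ω * X i (k * D) ω ∂ℙ = (1 - (r^2)^k) / (2 * θ) := by
        intro k
        have := hcv k k
        simp only [hc] at this
        rw [this, sub_self, abs_zero, mul_zero, Real.exp_zero, hr, ← Real.exp_nat_mul, ← Real.exp_nat_mul]
        congr 3; push_cast; ring
      simp_rw [this]
      rw [← Finset.sum_div, Finset.sum_sub_distrib]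
      simp only [Finset.sum_const, Finset.card_range, nsmul_eq_mul, mul_one]
      field_simp
      ring
    have e2 : ∑ k ∈ Finset.range n, (r^2)^k ≤ 2 / (θ * D) := by
      refine le_trans (Finset.sum_le_sum fun k _ => ?_) ((geom_le r hr0 hr1 n).trans hinv)
      gcongr
      nlinarith
    have e3 : 0 ≤ ∑ k ∈ Finset.range n, (r^2)^k := Finset.sum_nonneg fun k _ => by positivity
    have e4 : 1 / n * ∑ k ∈ Finset.range n, (r^2)^k ≤ 2 / θ * (1 / (n * D)) := by
      calc _ ≤ 1 / n * (2 / (θ * D)) := by gcongr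
        _ = _ := by field_simp
    have e5 : 0 ≤ 1 / n * ∑ k ∈ Finset.range n, (r^2)^k := by positivity
    have e6 : 2 * θ * ∫ ω, A ω * A ω ∂ℙ ≤ 4 / θ * (1 / (n * D)) := by
      calc _ ≤ 2 * θ * (2 / (θ^2 * (n * D))) := by gcongr
        _ = _ := by field_simp; norm_num
    have e7 : 0 ≤ 2 * θ * ∫ ω, A ω * A ω ∂ℙ := by positivity
    have e8 : 6 / θ * (1 / (n * D)) ≤ 6 / θ * (1 / √(n * D)) := by gcongr
    have e9 : 6 / θ * (1 / (n * D)) = 2 / θ * (1 / (n * D)) + 4 / θ * (1 / (n * D)) := by ring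
    rw [hd, e1, abs_le]
    constructor <;> linarith
  have hdecomp : ∀ ω, 2 * θ * (ouYtilde X i i n D ω / (n * D)) - 1 = 2 * θ / n * Q ω + (-(2 * θ) * R ω) + d := by
    intro ω
    rw [Ytilde_eq X i n hn D hD]
    simp only [hQ, hR, hd, hA]
    ring
  have hpt : ∀ ω, |2 * θ * (ouYtilde X i i n D ω / (n * D)) - 1| ^ p ≤
      3 ^ (p-1) * ((2 * θ / n) ^ p * |Q ω| ^ p + (2 * θ) ^ p * |R ω| ^ p + |d| ^ p) := by
    intro ω
    have h := Real.rpow_sum_le_const_mul_sum_rpow (Finset.univ : Finset (Fin 3))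
      ![2 * θ / n * Q ω, -(2 * θ) * R ω, d] hp
    simp only [Fin.sum_univ_three, Finset.card_univ, Fintype.card_fin, Matrix.cons_val_zero,
      Matrix.cons_val_one, Matrix.cons_val] at h
    have e1 : |2 * θ / n * Q ω| = (2 * θ / n) * |Q ω| := by rw [abs_mul, abs_of_pos (by positivity)]
    have e2 : |-(2 * θ) * R ω| = (2 * θ) * |R ω| := by
      rw [abs_mul, abs_neg, abs_of_pos (by positivity)]
    rw [hdecomp]
    refine (Real.rpow_le_rpow (abs_nonneg _) (abs_add_three _ _ _) (by linarith)).trans (h.trans (le_of_eq ?_))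
    rw [e1, e2, Real.mul_rpow (by positivity) (by positivity), Real.mul_rpow (by positivity) (by positivity)]
    norm_num
  have hI1 : Integrable (fun ω => (2 * θ / n) ^ p * |Q ω| ^ p) ℙ := q1.const_mul ((2 * θ / n) ^ p)
  have hI2 : Integrable (fun ω => (2 * θ) ^ p * |R ω| ^ p) ℙ := r1.const_mul ((2 * θ) ^ p)
  have hI12 : Integrable (fun ω => (2 * θ / n) ^ p * |Q ω| ^ p + (2 * θ) ^ p * |R ω| ^ p) ℙ := hI1.add hI2
  have hI3 : Integrable (fun _ : Ω => |d| ^ p) ℙ := integrable_const _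
  have hI : Integrable (fun ω => 3 ^ (p-1) * ((2 * θ / n) ^ p * |Q ω| ^ p + (2 * θ) ^ p * |R ω| ^ p + |d| ^ p)) ℙ :=
    ((hI1.add hI2).add hI3).const_mul _
  constructor
  · have hm : Measurable (fun ω => |2 * θ * (ouYtilde X i i n D ω / (n * D)) - 1| ^ p) := by
      have := hX.meas i
      unfold ouYtilde ouXtilde
      fun_prop
    refine hI.mono' hm.aestronglyMeasurable (Filter.Eventually.of_forall fun ω => ?_)
    rw [Real.norm_of_nonneg (by positivity)]
    exact hpt ω
  · refine (integral_mono_of_nonneg (Filter.Eventually.of_forall fun ω => by positivity) hI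
      (Filter.Eventually.of_forall hpt)).trans ?_
    rw [integral_const_mul, integral_add hI12 hI3, integral_add hI1 hI2, integral_const_mul,
      integral_const_mul, integral_const, probReal_univ, one_smul, mul_assoc]
    gcongr
    have t1 : (2 * θ / n) ^ p * ∫ ω, |Q ω| ^ p ∂ℙ ≤ K * (2 / √θ) ^ p * (1 / √(n * D)) ^ p := by
      calc _ ≤ (2 * θ / n) ^ p * (K * (n / (θ * √θ * √(n * D))) ^ p) := by gcongr
        _ = K * ((2 * θ / n) * (n / (θ * √θ * √(n * D)))) ^ p := by
            rw [Real.mul_rpow (by positivity) (by positivity)]; ring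
        _ = K * ((2 / √θ) * (1 / √(n * D))) ^ p := by
            congr 2; field_simp
        _ = _ := by rw [Real.mul_rpow (by positivity) (by positivity)]; ring
    have t2 : (2 * θ) ^ p * ∫ ω, |R ω| ^ p ∂ℙ ≤ K * (4 / θ) ^ p * (1 / √(n * D)) ^ p := by
      calc _ ≤ (2 * θ) ^ p * (K * (2 / (θ^2 * (n * D))) ^ p) := by gcongr
        _ = K * ((2 * θ) * (2 / (θ^2 * (n * D)))) ^ p := by
            rw [Real.mul_rpow (x := 2 * θ) (by positivity) (by positivity)]; ring
        _ = K * ((4 / θ) * (1 / (n * D))) ^ p := by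
            congr 2; field_simp; norm_num
        _ ≤ K * ((4 / θ) * (1 / √(n * D))) ^ p := by gcongr
        _ = _ := by rw [Real.mul_rpow (by positivity) (by positivity)]; ring
    have t3 : |d| ^ p ≤ (6 / θ) ^ p * (1 / √(n * D)) ^ p := by
      rw [← Real.mul_rpow (by positivity) (by positivity)]
      gcongr
    rw [add_mul, add_mul]
    linarith

end OUaux

/-- if `Δₙ → 0` and `nΔₙ → ∞`, then for every `p ≥ 1` there are
`c(p,θ) > 0` and `n₀` such that for all `n ≥ n₀`,
`(E[|2θ·√((Ỹ₁₁(n)/Tₙ)·(Ỹ₂₂(n)/Tₙ)) − 1|^p])^{1/p} ≤ c(p,θ)·Tₙ^{−1/2}`. -/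
theorem stmt_16 (θ : ℝ) (hθ : 0 < θ) (p : ℝ) (hp : 1 ≤ p)
    [IsProbabilityMeasure (ℙ : Measure Ω)]
    (X : Fin 2 → ℝ → Ω → ℝ) (hX : IsOUPair θ X)
    (Δ : ℕ → ℝ) (hΔpos : ∀ n, 0 < Δ n) (hΔ0 : Tendsto Δ atTop (𝓝 0))
    (hT : Tendsto (fun n : ℕ => (n : ℝ) * Δ n) atTop atTop) :
    ∃ c : ℝ, 0 < c ∧ ∃ n₀ : ℕ, ∀ n : ℕ, n₀ ≤ n →
      (∫ ω, |2 * θ * Real.sqrt ((ouYtilde X 0 0 n (Δ n) ω / ((n : ℝ) * Δ n))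
              * (ouYtilde X 1 1 n (Δ n) ω / ((n : ℝ) * Δ n))) - 1| ^ p ∂ℙ) ^ (1 / p)
        ≤ c / Real.sqrt ((n : ℝ) * Δ n) := by
  obtain ⟨M, hM, hone⟩ := OUaux.one_dim θ hθ p hp X hX
  have ev1 : ∀ᶠ n in atTop, Δ n < 1 / θ := (tendsto_order.1 hΔ0).2 _ (by positivity)
  have ev2 : ∀ᶠ n : ℕ in atTop, 1 ≤ (n : ℝ) * Δ n := hT.eventually_ge_atTop 1
  obtain ⟨n₀, hn₀⟩ := eventually_atTop.1 ((ev1.and ev2).and (eventually_ge_atTop 1))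
  refine ⟨(2 * M) ^ (1 / p), by positivity, n₀, fun n hn => ?_⟩
  obtain ⟨⟨h1, h2⟩, h3⟩ := hn₀ n hn
  have hθD : θ * Δ n ≤ 1 := by
    rw [lt_div_iff₀ hθ] at h1; linarith
  obtain ⟨a1, a2⟩ := hone 0 n (Δ n) h3 (hΔpos n) hθD h2
  obtain ⟨b1, b2⟩ := hone 1 n (Δ n) h3 (hΔpos n) hθD h2
  have hpt : ∀ ω, |2 * θ * Real.sqrt ((ouYtilde X 0 0 n (Δ n) ω / ((n : ℝ) * Δ n))
              * (ouYtilde X 1 1 n (Δ n) ω / ((n : ℝ) * Δ n))) - 1| ^ p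
      ≤ |2 * θ * (ouYtilde X 0 0 n (Δ n) ω / (n * Δ n)) - 1| ^ p
        + |2 * θ * (ouYtilde X 1 1 n (Δ n) ω / (n * Δ n)) - 1| ^ p := by
    intro ω
    have y0 := OUaux.Ytilde_nonneg X 0 n h3 (Δ n) (hΔpos n) ω
    have y1 := OUaux.Ytilde_nonneg X 1 n h3 (Δ n) (hΔpos n) ω
    set u := ouYtilde X 0 0 n (Δ n) ω / ((n : ℝ) * Δ n)
    set w := ouYtilde X 1 1 n (Δ n) ω / ((n : ℝ) * Δ n)
    have e : 2 * θ * √(u * w) = √((2 * θ * u) * (2 * θ * w)) := by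
      rw [show (2 * θ * u) * (2 * θ * w) = (2 * θ)^2 * (u * w) by ring,
        Real.sqrt_mul (sq_nonneg (2 * θ)), Real.sqrt_sq (by positivity)]
    rw [e]
    have hk := OUaux.ab_sqrt (a := 2 * θ * u) (b := 2 * θ * w) (by positivity) (by positivity)
    have p1 : 0 ≤ |2 * θ * u - 1| ^ p := by positivity
    have p2 : 0 ≤ |2 * θ * w - 1| ^ p := by positivity
    refine (Real.rpow_le_rpow (abs_nonneg _) hk (by linarith)).trans ?_
    rcases max_choice |2 * θ * u - 1| |2 * θ * w - 1| with h | h <;> rw [h] <;> linarith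
  have hI : ∫ ω, |2 * θ * Real.sqrt ((ouYtilde X 0 0 n (Δ n) ω / ((n : ℝ) * Δ n))
              * (ouYtilde X 1 1 n (Δ n) ω / ((n : ℝ) * Δ n))) - 1| ^ p ∂ℙ
      ≤ 2 * M * (1 / √(n * Δ n)) ^ p := by
    refine (integral_mono_of_nonneg (Filter.Eventually.of_forall fun ω => by positivity) (a1.add b1)
      (Filter.Eventually.of_forall hpt)).trans ?_
    have : ∫ ω, (|2 * θ * (ouYtilde X 0 0 n (Δ n) ω / (n * Δ n)) - 1| ^ p
        + |2 * θ * (ouYtilde X 1 1 n (Δ n) ω / (n * Δ n)) - 1| ^ p) ∂ℙ ≤ 2 * M * (1 / √(n * Δ n)) ^ p := by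
      rw [integral_add a1 b1]; linarith
    exact this
  calc _ ≤ (2 * M * (1 / √(n * Δ n)) ^ p) ^ (1 / p) :=
        Real.rpow_le_rpow (integral_nonneg fun ω => by positivity) hI (by positivity)
    _ = (2 * M) ^ (1 / p) * (1 / √(n * Δ n)) := by
        rw [Real.mul_rpow (by positivity) (by positivity), ← Real.rpow_mul (by positivity),
          mul_one_div_cancel (by linarith), Real.rpow_one]
    _ = _ := by ring

end
end

section
/- Let θ > 0 and take the mesh Δₙ = n^{−λ} with 1/2 < λ < 1. Then Yule's discrete nonsense correlation ρ̃(n) converges to 0 almost surely as n → ∞. -/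
open MeasureTheory ProbabilityTheory Real Filter Finset
open scoped Topology ENNReal NNReal

noncomputable section

variable {Ω : Type} [MeasureSpace Ω]

lemma aux_exp_bound (u : ℝ) (hu : |u| ≤ 1/5) : exp (-(u + 2*u^2)) ≤ 1 - u := by
  have h1 := (abs_le.mp hu).1
  have h2 := (abs_le.mp hu).2
  have hw : |-(u+2*u^2)| ≤ 1 := by
    rw [abs_le]; constructor <;> nlinarith
  have := (abs_le.mp (Real.abs_exp_sub_one_sub_id_le hw)).2
  nlinarith [sq_nonneg u, mul_nonneg (sq_nonneg u) (show (0:ℝ) ≤ 2 - (1+2*u)^2 by nlinarith)]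

lemma gauss_sq_exp (v : ℝ≥0) (s : ℝ) (hs : |2*s*v| ≤ 1/5) :
    Integrable (fun x : ℝ => exp (s * (x^2 - v))) (gaussianReal 0 v) ∧
      ∫ x : ℝ, exp (s * (x^2 - v)) ∂(gaussianReal 0 v) ≤ exp (4 * s^2 * v^2) := by
  by_cases hv : v = 0
  · subst hv
    simp only [gaussianReal_zero_var]
    refine ⟨integrable_dirac (by simp), ?_⟩
    rw [integral_dirac]
    simp
  have hv0 : (0:ℝ) < v := by positivity
  set b : ℝ := (1 - 2*s*v)/(2*v) with hb
  have hu2 := (abs_le.mp hs).2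
  have hbpos : 0 < b := by rw [hb]; apply div_pos <;> linarith
  have key : ∀ x : ℝ, gaussianPDFReal 0 v x • exp (s * (x^2 - v))
      = ((√(2 * π * v))⁻¹ * exp (-(s*v))) * exp (-b * x^2) := by
    intro x
    rw [gaussianPDFReal, smul_eq_mul, mul_assoc (√(2 * π * v))⁻¹, mul_assoc (√(2 * π * v))⁻¹,
      ← exp_add, ← exp_add]
    congr 2
    rw [hb]; field_simp; ring
  constructor
  · rw [gaussianReal_of_var_ne_zero _ hv]
    rw [integrable_withDensity_iff_integrable_smul' (measurable_gaussianPDF _ _)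
      (ae_of_all _ (fun x => by simp [gaussianPDF]))]
    have : (fun x : ℝ => (gaussianPDF 0 v x).toReal • exp (s * (x^2 - v)))
       = fun x => ((√(2 * π * v))⁻¹ * exp (-(s*v))) * exp (-b * x^2) := by
      funext x
      rw [toReal_gaussianPDF, key]
    rw [this]
    exact (integrable_exp_neg_mul_sq hbpos).const_mul _
  · rw [integral_gaussianReal_eq_integral_smul hv]
    simp_rw [key]
    rw [integral_const_mul, integral_gaussian]
    have h1 : (√(2 * π * v))⁻¹ * exp (-(s*v)) * √(π / b) = exp (-(s*v)) * (√(1-2*s*v))⁻¹ := by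
      have : π / b = (2*π*v) * (1-2*s*v)⁻¹ := by
        rw [hb]; field_simp
      rw [this, Real.sqrt_mul (show (0:ℝ) ≤ 2 * π * v by positivity) (1-2*s*v)⁻¹, Real.sqrt_inv]
      have : √(2 * π * v) ≠ 0 := by positivity
      field_simp
    rw [h1]
    have h2 := aux_exp_bound _ hs
    have h3 : exp (-(s*v) - 4*s^2*v^2) ≤ √(1-2*s*v) := by
      apply Real.le_sqrt_of_sq_le
      rw [← exp_nat_mul]
      refine le_trans (le_of_eq ?_) h2
      congr 1; push_cast; ring
    have h4 : 0 < √(1-2*s*v) := lt_of_lt_of_le (exp_pos _) h3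
    rw [← div_eq_mul_inv, div_le_iff₀ h4]
    calc exp (-(s*v)) = exp (4*s^2*v^2) * exp (-(s*v) - 4*s^2*v^2) := by
          rw [← exp_add]; congr 1; ring
      _ ≤ _ := by gcongr

lemma ae_tendsto_of_mgf {Ω : Type*} [MeasurableSpace Ω] (P : Measure Ω) [IsProbabilityMeasure P]
    (R : ℕ → Ω → ℝ) (s : ℕ → ℝ) (K c β : ℝ) (hc : 0 < c) (hβ : 0 < β)
    (hs : ∀ᶠ n : ℕ in atTop, c * (n:ℝ)^β ≤ s n)
    (hI : ∀ᶠ n : ℕ in atTop, Integrable (fun ω => exp (s n * R n ω)) P ∧ mgf (R n) P (s n) ≤ K)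
    (hI' : ∀ᶠ n : ℕ in atTop,
      Integrable (fun ω => exp (-s n * R n ω)) P ∧ mgf (R n) P (-s n) ≤ K) :
    ∀ᵐ ω ∂P, Tendsto (fun n => R n ω) atTop (𝓝 0) := by
  have main : ∀ ε : ℝ, 0 < ε → ∀ᵐ ω ∂P, ∀ᶠ n in atTop, |R n ω| < ε := by
    intro ε hε
    have hsum : Summable (fun n => P.real {ω | ε ≤ |R n ω|}) := by
      have hcε : 0 < c * ε := by positivity
      have h1 := (isLittleO_exp_neg_mul_rpow_atTop hcε (-2/β)).isBigO
      have h2 : Tendsto (fun n : ℕ => (n:ℝ)^β) atTop atTop :=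
        (tendsto_rpow_atTop hβ).comp tendsto_natCast_atTop_atTop
      have h3 := h1.comp_tendsto h2
      have h4 : Summable (fun n : ℕ => (n:ℝ)^(-2:ℝ)) := Real.summable_nat_rpow.mpr (by norm_num)
      refine summable_of_isBigO_nat h4 ?_
      have h5 : (fun n : ℕ => P.real {ω | ε ≤ |R n ω|}) =O[atTop]
          ((fun x => exp (-(c*ε) * x)) ∘ (fun n : ℕ => (n:ℝ)^β)) := by
        apply Asymptotics.IsBigO.of_bound (2*K)
        filter_upwards [hs, hI, hI'] with n hs hI hI'
        have hsn : 0 ≤ s n := le_trans (by positivity) hs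
        have a1 := measure_ge_le_exp_mul_mgf (X := R n) ε hsn hI.1
        have a2 := measure_le_le_exp_mul_mgf (X := R n) (-ε) (neg_nonpos.mpr hsn) hI'.1
        have a3 : P.real {ω | ε ≤ |R n ω|} ≤ P.real {ω | ε ≤ R n ω} + P.real {ω | R n ω ≤ -ε} := by
          refine le_trans (measureReal_mono ?_ (by finiteness)) (measureReal_union_le _ _)
          intro ω hω
          simp only [Set.mem_ofPred_eq, le_abs, Set.mem_union] at hω ⊢
          rcases hω with h | h
          · exact Or.inl h
          · right; linarith
        have hK : 0 ≤ K := le_trans mgf_nonneg hI.2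
        have a4 : exp (-s n * ε) ≤ exp (-(c*ε) * (n:ℝ)^β) := by
          apply exp_le_exp.mpr; nlinarith
        rw [Real.norm_of_nonneg measureReal_nonneg, Function.comp, Real.norm_of_nonneg (exp_pos _).le]
        have a5 : - -s n * -ε = -s n * ε := by ring
        rw [a5] at a2
        have b1 : exp (-s n * ε) * mgf (R n) P (s n) ≤ exp (-(c*ε) * (n:ℝ)^β) * K :=
          mul_le_mul a4 hI.2 mgf_nonneg (exp_pos _).le
        have b2 : exp (-s n * ε) * mgf (R n) P (-s n) ≤ exp (-(c*ε) * (n:ℝ)^β) * K :=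
          mul_le_mul a4 hI'.2 mgf_nonneg (exp_pos _).le
        linarith
      refine (h5.trans h3).congr' EventuallyEq.rfl ?_
      filter_upwards with n
      rw [Function.comp, ← Real.rpow_mul (by positivity)]
      congr 1; field_simp
    have hfin : ∑' n, P {ω | ε ≤ |R n ω|} ≠ ∞ := by
      have := hsum.tsum_ofReal_ne_top
      simpa [ofReal_measureReal] using this
    filter_upwards [ae_eventually_notMem hfin] with ω hω
    filter_upwards [hω] with n hn
    simpa using hn
  have hall : ∀ᵐ ω ∂P, ∀ m : ℕ, ∀ᶠ n in atTop, |R n ω| < 1/((m:ℝ)+1) :=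
    ae_all_iff.mpr (fun m => main _ (by positivity))
  filter_upwards [hall] with ω hω
  rw [Metric.tendsto_nhds]
  intro ε hε
  obtain ⟨m, hm⟩ := exists_nat_one_div_lt hε
  filter_upwards [hω m] with n hn
  rw [Real.dist_eq, sub_zero]
  linarith

lemma exists_diag (n : ℕ) (A : Matrix (Fin n) (Fin n) ℝ) (hA : A.IsHermitian) :
    ∃ (U : Matrix (Fin n) (Fin n) ℝ) (d : Fin n → ℝ), U.transpose * U = 1 ∧ U * U.transpose = 1 ∧
      A = U * Matrix.diagonal d * U.transpose := by
  refine ⟨(hA.eigenvectorUnitary : Matrix (Fin n) (Fin n) ℝ), hA.eigenvalues, ?_, ?_, ?_⟩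
  · exact Unitary.coe_star_mul_self hA.eigenvectorUnitary
  · exact Unitary.coe_mul_star_self hA.eigenvectorUnitary
  · have := hA.spectral_theorem
    rw [Unitary.conjStarAlgAut_apply] at this
    exact this

lemma gaussVec_mgf {Ω : Type*} [MeasurableSpace Ω] (P : Measure Ω) [IsProbabilityMeasure P]
    (n : ℕ) (x : Fin n → Ω → ℝ) (hm : ∀ i, Measurable (x i))
    (hg : ∀ c : Fin n → ℝ, ∃ v : ℝ≥0, P.map (fun ω => ∑ j, c j * x j ω) = gaussianReal 0 v)
    (C : Fin n → Fin n → ℝ) (hC : ∀ i j, ∫ ω, x i ω * x j ω ∂P = C i j)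
    (W : ℝ) (hW : ∑ i, ∑ j, C i j ^ 2 ≤ W) (s : ℝ) (hs : s^2 * W ≤ 1/100) :
    Integrable (fun ω => exp (s * (∑ i, x i ω ^ 2 - ∑ i, C i i))) P ∧
    mgf (fun ω => ∑ i, x i ω ^ 2 - ∑ i, C i i) P s ≤ exp (4 * s^2 * W) := by
  classical
  have hsym : ∀ i j, C i j = C j i := by
    intro i j; rw [← hC, ← hC]; congr 1; funext ω; ring
  obtain ⟨U, d, hU1, hU2, hUA⟩ := exists_diag n (Matrix.of C) (by
    ext i j; simp [Matrix.conjTranspose_apply, hsym i j])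
  have hD : U.transpose * Matrix.of C * U = Matrix.diagonal d := by
    rw [hUA]
    calc U.transpose * (U * Matrix.diagonal d * U.transpose) * U
        = (U.transpose * U) * Matrix.diagonal d * (U.transpose * U) := by
          simp only [Matrix.mul_assoc]
      _ = _ := by rw [hU1]; simp
  have htr : ∑ i, C i i = ∑ i, d i := by
    have : Matrix.trace (Matrix.of C) = Matrix.trace (Matrix.diagonal d) := by
      rw [hUA, Matrix.trace_mul_comm, ← Matrix.mul_assoc, hU1, Matrix.one_mul]
    simpa [Matrix.trace] using this
  have htr2 : ∑ i, ∑ j, C i j ^ 2 = ∑ i, d i ^ 2 := by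
    have : Matrix.trace (Matrix.of C * Matrix.of C) =
        Matrix.trace (Matrix.diagonal d * Matrix.diagonal d) := by
      rw [← hD]
      calc Matrix.trace (Matrix.of C * Matrix.of C)
          = Matrix.trace ((U * U.transpose) * (Matrix.of C * ((U * U.transpose) * Matrix.of C))) := by
            rw [hU2]; simp
        _ = Matrix.trace (U * (U.transpose * Matrix.of C * U * U.transpose * Matrix.of C)) := by
            simp only [Matrix.mul_assoc]
        _ = _ := by rw [Matrix.trace_mul_comm]; simp only [Matrix.mul_assoc]
    rw [Matrix.diagonal_mul_diagonal] at this
    simp only [Matrix.trace, Matrix.diag, Matrix.mul_apply, Matrix.of_apply,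
      Matrix.diagonal_apply_eq] at this
    calc _ = ∑ i, ∑ j, C i j * C j i := by
          refine Finset.sum_congr rfl fun i _ => Finset.sum_congr rfl fun j _ => ?_
          rw [hsym j i]; ring
      _ = _ := by rw [this]; simp [sq]
  set y : Fin n → Ω → ℝ := fun i ω => ∑ j, U j i * x j ω with hy
  have hym : ∀ i, Measurable (y i) := fun i => by
    simp only [hy]; fun_prop
  have hyg : ∀ c : Fin n → ℝ, ∃ v : ℝ≥0, P.map (fun ω => ∑ i, c i * y i ω) = gaussianReal 0 v := by
    intro c
    obtain ⟨v, hv⟩ := hg (fun j => ∑ i, c i * U j i)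
    refine ⟨v, ?_⟩
    rw [← hv]
    congr 1; funext ω
    simp only [hy, Finset.mul_sum, Finset.sum_mul]
    rw [Finset.sum_comm]
    simp only [mul_assoc]
  have hyi : ∀ i, ∃ v : ℝ≥0, P.map (y i) = gaussianReal 0 v := by
    intro i
    obtain ⟨v, hv⟩ := hyg (Pi.single i 1)
    refine ⟨v, ?_⟩
    rw [← hv]; congr 1; funext ω; simp [Pi.single_apply]
  have hxi : ∀ i, ∃ v : ℝ≥0, P.map (x i) = gaussianReal 0 v := by
    intro i
    obtain ⟨v, hv⟩ := hg (Pi.single i 1)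
    refine ⟨v, ?_⟩
    rw [← hv]; congr 1; funext ω; simp [Pi.single_apply]
  have hL : ∀ z : Ω → ℝ, Measurable z → (∃ v : ℝ≥0, P.map z = gaussianReal 0 v) →
      MemLp z 2 P ∧ ∫ ω, z ω ∂P = 0 := by
    rintro z hz ⟨v, hv⟩
    have hl : HasGaussianLaw z P := ⟨by rw [hv]; infer_instance⟩
    refine ⟨hl.memLp_two, ?_⟩
    have : ∫ t, t ∂(P.map z) = 0 := by rw [hv]; simp
    rwa [integral_map hz.aemeasurable (by fun_prop)] at this
  have hcross : ∀ i k, ∫ ω, y i ω * y k ω ∂P = (Matrix.diagonal d) i k := by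
    intro i k
    rw [← hD]
    have h1 : ∀ ω, y i ω * y k ω = ∑ l, ∑ j, (U j i * U l k) * (x j ω * x l ω) := by
      intro ω
      simp only [hy, Finset.sum_mul_sum]
      rw [Finset.sum_comm]
      refine Finset.sum_congr rfl fun l _ => Finset.sum_congr rfl fun j _ => ?_
      ring
    have hint : ∀ j l, Integrable (fun ω => x j ω * x l ω) P := fun j l =>
      (hL _ (hm j) (hxi j)).1.integrable_mul (hL _ (hm l) (hxi l)).1
    simp_rw [h1]
    rw [integral_finsetSum _ (fun l _ => integrable_finsetSum _ fun j _ => (hint j l).const_mul _)]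
    simp only [Matrix.mul_apply, Matrix.transpose_apply, Matrix.of_apply, Finset.sum_mul]
    refine Finset.sum_congr rfl fun l _ => ?_
    rw [integral_finsetSum _ (fun j _ => (hint j l).const_mul _)]
    refine Finset.sum_congr rfl fun j _ => ?_
    rw [integral_const_mul, hC]; ring
  have hsq : ∀ ω, ∑ i, x i ω ^ 2 = ∑ i, y i ω ^ 2 := by
    intro ω
    have e : ∀ f : Fin n → ℝ, ∑ i, f i ^ 2 = f ⬝ᵥ f := fun f => by simp [dotProduct, sq]
    have : (fun i => y i ω) = U.transpose.mulVec (fun j => x j ω) := by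
      funext i; simp [hy, Matrix.mulVec, dotProduct]
    rw [e (fun i => x i ω), e (fun i => y i ω), this, Matrix.dotProduct_mulVec,
      Matrix.vecMul_transpose, Matrix.mulVec_mulVec, hU2, Matrix.one_mulVec]
  have hind : iIndepFun y P := by
    have hgl : HasGaussianLaw (fun ω => (y · ω)) P := by
      refine ⟨isGaussian_of_map_eq_gaussianReal fun L => ?_⟩
      obtain ⟨v, hv⟩ := hyg (fun i => L (Pi.single i 1))
      refine ⟨0, v, ?_⟩
      rw [Measure.map_map (by fun_prop) (measurable_pi_lambda _ hym), ← hv]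
      congr 1; funext ω
      simp only [Function.comp]
      conv_lhs => rw [← Finset.univ_sum_single (fun i => y i ω), map_sum]
      refine Finset.sum_congr rfl fun i _ => ?_
      have : (Pi.single i (y i ω) : Fin n → ℝ) = y i ω • Pi.single i 1 := by
        rw [← Pi.single_smul]; simp
      rw [this, map_smul, smul_eq_mul, mul_comm]
    refine hgl.iIndepFun_of_covariance_eq_zero fun i j hij => ?_
    rw [covariance_eq_sub (hL _ (hym i) (hyi i)).1 (hL _ (hym j) (hyi j)).1,
      (hL _ (hym i) (hyi i)).2]
    have := hcross i j
    rw [Matrix.diagonal_apply_ne _ hij] at this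
    simp [this]
  have hvar : ∀ i, 0 ≤ d i ∧ P.map (y i) = gaussianReal 0 (d i).toNNReal := by
    intro i
    obtain ⟨v, hv⟩ := hyi i
    have h1 : ∫ ω, y i ω * y i ω ∂P = v := by
      have h2 : ∫ t, t * t ∂(P.map (y i)) = v := by
        have := variance_id_gaussianReal (μ := 0) (v := v)
        rw [variance_eq_integral (by fun_prop)] at this
        rw [hv]
        simpa [sq] using this
      rwa [integral_map (hym i).aemeasurable (by fun_prop)] at h2
    have h3 := hcross i i
    rw [h1, Matrix.diagonal_apply_eq] at h3
    rw [← h3]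
    simp [hv]
  have hdW : ∑ i, d i ^ 2 ≤ W := htr2 ▸ hW
  have hone : ∀ i, Integrable (fun ω => exp (s * (y i ω ^ 2 - d i))) P ∧
      mgf (fun ω => y i ω ^ 2 - d i) P s ≤ exp (4 * s^2 * d i ^ 2) := by
    intro i
    obtain ⟨h0, hv⟩ := hvar i
    have hdi : d i ^ 2 ≤ W := le_trans
      (Finset.single_le_sum (f := fun i => d i ^ 2) (fun i _ => sq_nonneg _) (Finset.mem_univ i)) hdW
    have hb : |2 * s * ((d i).toNNReal : ℝ)| ≤ 1/5 := by
      rw [Real.coe_toNNReal _ h0]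
      apply abs_le_of_sq_le_sq _ (by norm_num)
      nlinarith [mul_le_mul_of_nonneg_left hdi (sq_nonneg s)]
    obtain ⟨g1, g2⟩ := gauss_sq_exp _ s hb
    rw [← hv] at g1 g2
    rw [Real.coe_toNNReal _ h0] at g1 g2
    rw [integral_map (hym i).aemeasurable (by fun_prop)] at g2
    exact ⟨g1.comp_measurable (hym i), g2⟩
  have hind2 : iIndepFun (fun i ω => y i ω ^ 2 - d i) P :=
    hind.comp (fun i t => t^2 - d i) (fun i => by fun_prop)
  have hm2 : ∀ i, Measurable (fun ω => y i ω ^ 2 - d i) := fun i => by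
    have := hym i; fun_prop
  have heq : (fun ω => ∑ i, x i ω ^ 2 - ∑ i, C i i) = ∑ i, fun ω => y i ω ^ 2 - d i := by
    funext ω; rw [hsq, htr]; simp
  constructor
  · have := hind2.integrable_exp_mul_sum hm2 (s := Finset.univ) (t := s) (fun i _ => (hone i).1)
    rw [← heq] at this
    exact this
  · rw [heq, hind2.mgf_sum hm2]
    calc _ ≤ ∏ i, exp (4 * s^2 * d i ^ 2) :=
          Finset.prod_le_prod (fun i _ => mgf_nonneg) (fun i _ => (hone i).2)
      _ = exp (4 * s^2 * ∑ i, d i ^ 2) := by rw [← Real.exp_sum, Finset.mul_sum]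
      _ ≤ _ := by gcongr


lemma geom_bound (x : ℝ) (hx : 0 < x) (n : ℕ) :
    ∑ k ∈ range n, exp (-x * k) ≤ 1 + 1/x := by
  have h1 : exp (-x) < 1 := by rw [exp_lt_one_iff]; linarith
  have h2 : ∀ k : ℕ, exp (-x * k) = exp (-x) ^ k := fun k => by
    rw [← exp_nat_mul]; congr 1; ring
  simp_rw [h2]
  have h3 : ∑ k ∈ range n, exp (-x)^k ≤ (1 - exp (-x))⁻¹ := by
    rw [← tsum_geometric_of_lt_one (exp_pos _).le h1]
    exact (summable_geometric_of_lt_one (exp_pos _).le h1).sum_le_tsum _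
      (fun i _ => by positivity)
  refine h3.trans ?_
  have h4 : exp (-x) ≤ 1/(1+x) := by
    rw [exp_neg, ← one_div]
    exact one_div_le_one_div_of_le (by linarith) (by linarith [add_one_le_exp x])
  have h5 : x/(1+x) ≤ 1 - exp (-x) := by
    have : x/(1+x) = 1 - 1/(1+x) := by field_simp; ring
    linarith
  calc (1 - exp (-x))⁻¹ ≤ (x/(1+x))⁻¹ := inv_anti₀ (by positivity) h5
    _ = _ := by field_simp; ring

lemma abs_geom_bound (x : ℝ) (hx : 0 < x) (n j : ℕ) (hj : j < n) :
    ∑ k ∈ range n, exp (-x * |(k:ℝ) - j|) ≤ 2 * (1 + 1/x) := by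
  have h1 : ∑ k ∈ range n, exp (-x * |(k:ℝ) - j|) =
      ∑ k ∈ range j, exp (-x * |(k:ℝ) - j|) + ∑ k ∈ Ico j n, exp (-x * |(k:ℝ) - j|) :=
    (Finset.sum_range_add_sum_Ico _ hj.le).symm
  have h2 : ∑ k ∈ Ico j n, exp (-x * |(k:ℝ) - j|) ≤ 1 + 1/x := by
    rw [Finset.sum_Ico_eq_sum_range]
    refine le_trans (le_of_eq ?_) (geom_bound x hx (n - j))
    refine Finset.sum_congr rfl fun k _ => ?_
    push_cast
    rw [add_sub_cancel_left, abs_of_nonneg (by positivity)]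
  have h3 : ∑ k ∈ range j, exp (-x * |(k:ℝ) - j|) ≤ 1 + 1/x := by
    rw [← Finset.sum_range_reflect]
    refine le_trans ?_ (geom_bound x hx j)
    refine Finset.sum_le_sum fun k hk => ?_
    have hk' := Finset.mem_range.mp hk
    apply exp_le_exp.mpr
    have : ((j - 1 - k : ℕ) : ℝ) = j - 1 - k := by
      rw [Nat.sub_sub, Nat.cast_sub (by omega)]; push_cast; ring
    rw [this, abs_of_nonpos (by linarith [(Nat.cast_nonneg k : (0:ℝ) ≤ k)])]
    nlinarith
  linarith

/-- covariance -/
noncomputable def ouC (θ s t : ℝ) : ℝ :=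
  (Real.exp (-θ * |t - s|) - Real.exp (-θ * (t + s))) / (2 * θ)

lemma ouC_nonneg {θ s t : ℝ} (hθ : 0 < θ) (hs : 0 ≤ s) (ht : 0 ≤ t) : 0 ≤ ouC θ s t := by
  apply div_nonneg _ (by positivity)
  rw [sub_nonneg, exp_le_exp]
  have : |t - s| ≤ t + s := by rw [abs_le]; constructor <;> linarith
  nlinarith

lemma ouC_le {θ s t : ℝ} (hθ : 0 < θ) : ouC θ s t ≤ exp (-θ * |t - s|) / (2*θ) := by
  apply div_le_div_of_nonneg_right _ (by positivity)
  linarith [exp_pos (-θ * (t+s))]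

lemma ouC_le' {θ s t : ℝ} (hθ : 0 < θ) : ouC θ s t ≤ 1 / (2*θ) := by
  refine (ouC_le hθ).trans ?_
  apply div_le_div_of_nonneg_right _ (by positivity)
  rw [exp_le_one_iff]
  have := abs_nonneg (t - s)
  nlinarith

lemma ouC_sum_le {θ : ℝ} (hθ : 0 < θ) (Δ : ℝ) (hΔ : 0 < Δ) (hΔ1 : Δ ≤ 1) (n : ℕ) :
    ∑ j ∈ range n, ∑ k ∈ range n, ouC θ (j*Δ) (k*Δ) ≤ ((1 + 1/θ)/θ) * (n/Δ) := by
  have h : ∀ j ∈ range n, ∑ k ∈ range n, ouC θ (j*Δ) (k*Δ) ≤ ((1+1/θ)/θ) * (1/Δ) := by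
    intro j hj
    calc _ ≤ ∑ k ∈ range n, exp (-(θ*Δ) * |(k:ℝ) - j|) / (2*θ) := by
          refine Finset.sum_le_sum fun k _ => (ouC_le hθ).trans (le_of_eq ?_)
          rw [← sub_mul, abs_mul, abs_of_pos hΔ]; congr 2; ring
      _ = (∑ k ∈ range n, exp (-(θ*Δ) * |(k:ℝ) - j|)) / (2*θ) := by rw [Finset.sum_div]
      _ ≤ (2 * (1 + 1/(θ*Δ))) / (2*θ) := by
          gcongr; exact abs_geom_bound _ (by positivity) n j (Finset.mem_range.mp hj)
      _ ≤ _ := by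
          have : 2 * (1 + 1/(θ*Δ)) / (2*θ) = (Δ + 1/θ)/θ * (1/Δ) := by field_simp
          rw [this]; gcongr
  refine (Finset.sum_le_sum h).trans (le_of_eq ?_)
  rw [Finset.sum_const, card_range, nsmul_eq_mul]; ring

lemma ouC_sq_sum_le {θ : ℝ} (hθ : 0 < θ) (Δ : ℝ) (hΔ : 0 < Δ) (hΔ1 : Δ ≤ 1) (n : ℕ) :
    ∑ j ∈ range n, ∑ k ∈ range n, ouC θ (j*Δ) (k*Δ) ^ 2
      ≤ (1/(2*θ)) * (((1 + 1/θ)/θ) * (n/Δ)) := by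
  refine le_trans ?_ (mul_le_mul_of_nonneg_left (ouC_sum_le hθ Δ hΔ hΔ1 n) (by positivity))
  rw [Finset.mul_sum]
  refine Finset.sum_le_sum fun j _ => ?_
  rw [Finset.mul_sum]
  refine Finset.sum_le_sum fun k _ => ?_
  rw [sq]
  exact mul_le_mul_of_nonneg_right (ouC_le' hθ) (ouC_nonneg hθ (by positivity) (by positivity))

lemma ouC_trace {θ : ℝ} (hθ : 0 < θ) (Δ : ℝ) (hΔ : 0 < Δ) (hΔ1 : Δ ≤ 1) (n : ℕ) (hn : 0 < n) :
    |(1/(n:ℝ)) * ∑ j ∈ range n, ouC θ (j*Δ) (j*Δ) - 1/(2*θ)|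
      ≤ ((1 + 1/(2*θ))/(2*θ)) * (1/(n*Δ)) := by
  have e : (1/(n:ℝ)) * ∑ j ∈ range n, ouC θ (j*Δ) (j*Δ) - 1/(2*θ)
     = - ((1/(n:ℝ)) * (1/(2*θ)) * ∑ j ∈ range n, exp (-(2*θ*Δ) * j)) := by
    have : ∀ j : ℕ, ouC θ (j*Δ) (j*Δ) = 1/(2*θ) - (1/(2*θ)) * exp (-(2*θ*Δ) * j) := by
      intro j
      rw [ouC, sub_self, abs_zero, mul_zero, exp_zero]
      have : -θ * (j*Δ + j*Δ) = -(2*θ*Δ) * j := by ring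
      rw [this]; ring
    simp_rw [this]
    rw [Finset.sum_sub_distrib, Finset.sum_const, card_range, ← Finset.mul_sum, nsmul_eq_mul]
    have : (n:ℝ) ≠ 0 := by positivity
    field_simp
    ring
  rw [e, abs_neg, abs_of_nonneg (by positivity)]
  calc _ ≤ (1/(n:ℝ)) * (1/(2*θ)) * (1 + 1/(2*θ*Δ)) := by
        gcongr; exact geom_bound _ (by positivity) n
    _ = (Δ + 1/(2*θ))/(2*θ) * (1/(n*Δ)) := by
        have : (n:ℝ) ≠ 0 := by positivity
        field_simp
    _ ≤ _ := by gcongr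

structure IsOU1 {Ω : Type} [MeasureSpace Ω] (θ : ℝ) (Z : ℝ → Ω → ℝ) : Prop where
  meas : ∀ t, Measurable (Z t)
  gaussian : ∀ (n : ℕ) (t : Fin n → ℝ) (c : Fin n → ℝ), (∀ j, 0 ≤ t j) →
      ∃ v : NNReal, Measure.map (fun ω => ∑ j, c j * Z (t j) ω) ℙ = gaussianReal 0 v
  cov : ∀ (s t : ℝ), 0 ≤ s → 0 ≤ t → ∫ ω, Z s ω * Z t ω ∂ℙ = ouC θ s t

lemma memLp_of_gauss {P : Measure Ω} [IsProbabilityMeasure P] {z : Ω → ℝ} (hz : Measurable z)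
    (h : ∃ v : ℝ≥0, P.map z = gaussianReal 0 v) : MemLp z 2 P ∧ ∫ ω, z ω ∂P = 0 := by
  obtain ⟨v, hv⟩ := h
  have hl : HasGaussianLaw z P := ⟨by rw [hv]; infer_instance⟩
  refine ⟨hl.memLp_two, ?_⟩
  have : ∫ t, t ∂(P.map z) = 0 := by rw [hv]; simp
  rwa [integral_map hz.aemeasurable (by fun_prop)] at this

lemma IsOUPair.combo [IsProbabilityMeasure (ℙ : Measure Ω)] {θ : ℝ}
    {X : Fin 2 → ℝ → Ω → ℝ} (hX : IsOUPair θ X) (a b : ℝ) (hab : a^2 + b^2 = 1) :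
    IsOU1 θ (fun t ω => a * X 0 t ω + b * X 1 t ω) := by
  have hm := hX.meas
  have hL : ∀ i t, 0 ≤ t → MemLp (X i t) 2 (ℙ : Measure Ω) ∧ ∫ ω, X i t ω ∂ℙ = 0 := by
    intro i t ht
    apply memLp_of_gauss (hm i t)
    obtain ⟨v, hv⟩ := hX.gaussian i 1 (fun _ => t) (fun _ => 1) (fun _ => ht)
    exact ⟨v, by simpa using hv⟩
  refine ⟨fun t => by have := hm 0 t; have := hm 1 t; fun_prop, ?_, ?_⟩
  · intro n t c ht
    obtain ⟨v, hv⟩ := hX.gaussian 0 n t (fun j => a * c j) ht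
    obtain ⟨w, hw⟩ := hX.gaussian 1 n t (fun j => b * c j) ht
    have hi : IndepFun (fun ω => ∑ j, (a * c j) * X 0 (t j) ω)
        (fun ω => ∑ j, (b * c j) * X 1 (t j) ω) ℙ := by
      have := hX.indep.comp (φ := fun f : ℝ → ℝ => ∑ j, (a * c j) * f (t j))
        (ψ := fun f : ℝ → ℝ => ∑ j, (b * c j) * f (t j)) (by fun_prop) (by fun_prop)
      exact this
    have := gaussianReal_add_gaussianReal_of_indepFun hi hv hw
    refine ⟨v + w, ?_⟩
    rw [add_zero] at this
    rw [← this]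
    congr 1; funext ω
    rw [Pi.add_apply, ← Finset.sum_add_distrib]
    refine Finset.sum_congr rfl fun j _ => by ring
  · intro s t hs ht
    have hcr : ∀ u v, 0 ≤ u → 0 ≤ v → ∫ ω, X 0 u ω * X 1 v ω ∂ℙ = 0 := by
      intro u v hu hv
      have hi : IndepFun (X 0 u) (X 1 v) ℙ :=
        hX.indep.comp (φ := fun f : ℝ → ℝ => f u) (ψ := fun f : ℝ → ℝ => f v)
          (by fun_prop) (by fun_prop)
      rw [hi.integral_fun_mul_eq_mul_integral (hm 0 u).aestronglyMeasurable
        (hm 1 v).aestronglyMeasurable, (hL 0 u hu).2, zero_mul]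
    have hint : ∀ i j u v, 0 ≤ u → 0 ≤ v →
        Integrable (fun ω => X i u ω * X j v ω) (ℙ : Measure Ω) :=
      fun i j u v hu hv => (hL i u hu).1.integrable_mul (hL j v hv).1
    have e : (fun ω => (a * X 0 s ω + b * X 1 s ω) * (a * X 0 t ω + b * X 1 t ω)) =
      fun ω => (a^2 * (X 0 s ω * X 0 t ω) + b^2 * (X 1 s ω * X 1 t ω)) +
        ((a*b) * (X 0 s ω * X 1 t ω) + (a*b) * (X 0 t ω * X 1 s ω)) := by
      funext ω; ring
    have i1 := (hint 0 0 s t hs ht).const_mul (a^2)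
    have i2 := (hint 1 1 s t hs ht).const_mul (b^2)
    have i3 := (hint 0 1 s t hs ht).const_mul (a*b)
    have i4 := (hint 0 1 t s ht hs).const_mul (a*b)
    have i12 : Integrable (fun ω => a^2 * (X 0 s ω * X 0 t ω) + b^2 * (X 1 s ω * X 1 t ω))
        (ℙ : Measure Ω) := i1.add i2
    have i34 : Integrable (fun ω => (a*b) * (X 0 s ω * X 1 t ω) + (a*b) * (X 0 t ω * X 1 s ω))
        (ℙ : Measure Ω) := i3.add i4
    rw [e, integral_add i12 i34, integral_add i1 i2, integral_add i3 i4]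
    simp only [integral_const_mul]
    rw [hcr s t hs ht, hcr t s ht hs, hX.cov 0 s t hs ht, hX.cov 1 s t hs ht, ← add_mul, hab]
    simp [ouC]

lemma scale_ratio (T p q r : ℝ) (hT : 0 < T) :
    T * p / √(T * q * (T * r)) = p / √(q * r) := by
  rw [mul_mul_mul_comm, Real.sqrt_mul (by positivity), Real.sqrt_mul_self hT.le,
    mul_div_mul_left _ _ hT.ne']

lemma mesh_facts (l : ℝ) (hl1 : 1 / 2 < l) (hl2 : l < 1) (n : ℕ) (hn : 0 < n) :
    0 < (n:ℝ)^(-l) ∧ (n:ℝ)^(-l) ≤ 1 ∧ (n:ℝ) * (n:ℝ)^(-l) = (n:ℝ)^(1-l) ∧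
      ((n:ℝ)^((1-l)/2))^2 = n * (n:ℝ)^(-l) := by
  have h0 : (0:ℝ) < n := by positivity
  have h1 : (1:ℝ) ≤ n := by exact_mod_cast hn
  have h3 : (n:ℝ) * (n:ℝ)^(-l) = (n:ℝ)^(1-l) := by
    rw [sub_eq_add_neg, Real.rpow_add h0, Real.rpow_one]
  refine ⟨by positivity, Real.rpow_le_one_of_one_le_of_nonpos h1 (by linarith), h3, ?_⟩
  rw [h3, ← Real.rpow_natCast, ← Real.rpow_mul h0.le]
  congr 1; push_cast; ring

lemma IsOU1.tendsto_Q [IsProbabilityMeasure (ℙ : Measure Ω)] {θ : ℝ} (hθ : 0 < θ)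
    {l : ℝ} (hl1 : 1 / 2 < l) (hl2 : l < 1) {Z : ℝ → Ω → ℝ} (hZ : IsOU1 θ Z) :
    ∀ᵐ ω ∂(ℙ : Measure Ω), Tendsto (fun n : ℕ =>
      (1/(n:ℝ)) * ∑ k ∈ range n, Z (k * (n:ℝ)^(-l)) ω ^ 2) atTop (𝓝 (1/(2*θ))) := by
  set K : ℝ := (1/(2*θ)) * ((1 + 1/θ)/θ) with hK
  have hKpos : 0 < K := by positivity
  set c : ℝ := 1/(10*√K) with hc
  have hcpos : 0 < c := by positivity
  have hc2 : c^2 * K = 1/100 := by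
    rw [hc, div_pow, mul_pow, Real.sq_sqrt hKpos.le]; field_simp; norm_num
  have key : ∀ n : ℕ, 0 < n → ∀ σ : ℝ, σ^2 = (c * (n:ℝ)^((1-l)/2))^2 →
      Integrable (fun ω => exp (σ * ((1/(n:ℝ)) * (∑ k ∈ range n, Z (k * (n:ℝ)^(-l)) ω ^ 2 -
        ∑ k ∈ range n, ouC θ (k * (n:ℝ)^(-l)) (k * (n:ℝ)^(-l)))))) (ℙ : Measure Ω) ∧
      mgf (fun ω => (1/(n:ℝ)) * (∑ k ∈ range n, Z (k * (n:ℝ)^(-l)) ω ^ 2 -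
        ∑ k ∈ range n, ouC θ (k * (n:ℝ)^(-l)) (k * (n:ℝ)^(-l)))) (ℙ : Measure Ω) σ
        ≤ exp (1/25) := by
    intro n hn σ hσ
    obtain ⟨hΔ, hΔ1, -, hpow⟩ := mesh_facts l hl1 hl2 n hn
    set Δ := (n:ℝ)^(-l)
    have hn0 : (n:ℝ) ≠ 0 := by positivity
    have hsW : (σ * (1/(n:ℝ)))^2 * (K * (n/Δ)) = 1/100 := by
      rw [mul_pow, hσ, mul_pow, hpow, ← hc2]
      field_simp
    have hnn : ∀ k : Fin n, 0 ≤ ((k:ℕ):ℝ) * Δ := fun k => by positivity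
    have := gaussVec_mgf (ℙ : Measure Ω) n (fun k => Z (((k:ℕ):ℝ) * Δ)) (fun k => hZ.meas _)
      (fun c => hZ.gaussian n (fun k => ((k:ℕ):ℝ) * Δ) c hnn)
      (fun j k => ouC θ (((j:ℕ):ℝ) * Δ) (((k:ℕ):ℝ) * Δ))
      (fun j k => hZ.cov _ _ (hnn j) (hnn k)) (K * (n/Δ))
      (by
        have h := ouC_sq_sum_le hθ Δ hΔ hΔ1 n
        rw [← mul_assoc] at h
        refine le_trans (le_of_eq ?_) h
        rw [Finset.sum_range]
        refine Finset.sum_congr rfl fun j _ => ?_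
        rw [Finset.sum_range])
      (σ * (1/(n:ℝ))) hsW.le
    rw [mul_assoc 4, hsW] at this
    rw [mgf_const_mul, Finset.sum_range (fun k => ouC θ (k * Δ) (k * Δ))]
    simp_rw [Finset.sum_range (fun k => Z (k * Δ) _ ^ 2), ← mul_assoc σ]
    rw [mul_comm (1/(n:ℝ)) σ]
    refine ⟨this.1, this.2.trans (le_of_eq (by norm_num))⟩
  have h1 := ae_tendsto_of_mgf (ℙ : Measure Ω) (fun (n : ℕ) ω => (1/(n:ℝ)) *
      (∑ k ∈ range n, Z (k * (n:ℝ)^(-l)) ω ^ 2 -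
        ∑ k ∈ range n, ouC θ (k * (n:ℝ)^(-l)) (k * (n:ℝ)^(-l))))
      (fun n => c * (n:ℝ)^((1-l)/2)) (exp (1/25)) c ((1-l)/2) hcpos (by linarith)
      (Eventually.of_forall fun n => le_rfl)
      (by filter_upwards [eventually_gt_atTop 0] with n hn using key n hn _ rfl)
      (by filter_upwards [eventually_gt_atTop 0] with n hn using key n hn _ (by ring))
  have h2 : Tendsto (fun n : ℕ => (1/(n:ℝ)) *
      ∑ k ∈ range n, ouC θ (k * (n:ℝ)^(-l)) (k * (n:ℝ)^(-l))) atTop (𝓝 (1/(2*θ))) := by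
    rw [tendsto_iff_norm_sub_tendsto_zero]
    have h3 : Tendsto (fun n : ℕ => ((1 + 1/(2*θ))/(2*θ)) * (1/(n:ℝ)^(1-l))) atTop (𝓝 0) := by
      have : Tendsto (fun n : ℕ => (n:ℝ)^(1-l)) atTop atTop :=
        (tendsto_rpow_atTop (by linarith)).comp tendsto_natCast_atTop_atTop
      simpa using (this.inv_tendsto_atTop).const_mul ((1 + 1/(2*θ))/(2*θ))
    refine squeeze_zero' (Eventually.of_forall fun n => norm_nonneg _) ?_ h3
    filter_upwards [eventually_gt_atTop 0] with n hn
    obtain ⟨hΔ, hΔ1, hT, -⟩ := mesh_facts l hl1 hl2 n hn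
    rw [← hT]
    exact ouC_trace hθ _ hΔ hΔ1 n hn
  filter_upwards [h1] with ω hω
  have := hω.add h2
  rw [zero_add] at this
  refine this.congr fun n => ?_
  ring

lemma IsOU1.tendsto_S [IsProbabilityMeasure (ℙ : Measure Ω)] {θ : ℝ} (hθ : 0 < θ)
    {l : ℝ} (hl1 : 1 / 2 < l) (hl2 : l < 1) {Z : ℝ → Ω → ℝ} (hZ : IsOU1 θ Z) :
    ∀ᵐ ω ∂(ℙ : Measure Ω), Tendsto (fun n : ℕ =>
      (1/(n:ℝ)) * ∑ k ∈ range n, Z (k * (n:ℝ)^(-l)) ω) atTop (𝓝 0) := by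
  set K : ℝ := (1 + 1/θ)/θ with hK
  have hKpos : 0 < K := by positivity
  have key : ∀ n : ℕ, 0 < n → ∀ σ : ℝ, σ^2 = (1 * (n:ℝ)^((1-l)/2))^2 →
      Integrable (fun ω => exp (σ * ((1/(n:ℝ)) * ∑ k ∈ range n, Z (k * (n:ℝ)^(-l)) ω)))
        (ℙ : Measure Ω) ∧
      mgf (fun ω => (1/(n:ℝ)) * ∑ k ∈ range n, Z (k * (n:ℝ)^(-l)) ω) (ℙ : Measure Ω) σ
        ≤ exp (K/2) := by
    intro n hn σ hσ
    obtain ⟨hΔ, hΔ1, -, hpow⟩ := mesh_facts l hl1 hl2 n hn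
    set Δ := (n:ℝ)^(-l)
    have hn0 : (n:ℝ) ≠ 0 := by positivity
    have hnn : ∀ k : ℕ, 0 ≤ (k:ℝ) * Δ := fun k => by positivity
    set R : Ω → ℝ := fun ω => (1/(n:ℝ)) * ∑ k ∈ range n, Z (k * Δ) ω with hR
    have hRm : Measurable R := by
      have := hZ.meas
      simp only [hR]; fun_prop
    obtain ⟨v, hv⟩ := hZ.gaussian n (fun k => ((k:ℕ):ℝ) * Δ) (fun _ => 1/(n:ℝ)) (fun k => hnn k)
    have hv : Measure.map R ℙ = gaussianReal 0 v := by
      rw [← hv]; congr 1; funext ω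
      rw [hR]; simp only
      rw [Finset.sum_range, Finset.mul_sum]
    have hvar : ∫ ω, R ω * R ω ∂ℙ = v := by
      have h2 : ∫ t, t * t ∂((ℙ : Measure Ω).map R) = v := by
        have := variance_id_gaussianReal (μ := 0) (v := v)
        rw [variance_eq_integral (by fun_prop)] at this
        rw [hv]
        simpa [sq] using this
      rwa [integral_map hRm.aemeasurable (by fun_prop)] at h2
    have hL : ∀ t, 0 ≤ t → MemLp (Z t) 2 (ℙ : Measure Ω) := by
      intro t ht
      refine (memLp_of_gauss (hZ.meas t) ?_).1
      obtain ⟨v, hv⟩ := hZ.gaussian 1 (fun _ => t) (fun _ => 1) (fun _ => ht)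
      exact ⟨v, by simpa using hv⟩
    have hvar2 : ∫ ω, R ω * R ω ∂ℙ = (1/(n:ℝ))^2 *
        ∑ j ∈ range n, ∑ k ∈ range n, ouC θ (j*Δ) (k*Δ) := by
      have e : (fun ω => R ω * R ω) = fun ω => (1/(n:ℝ))^2 *
          ∑ j ∈ range n, ∑ k ∈ range n, Z (j*Δ) ω * Z (k*Δ) ω := by
        funext ω
        rw [← Finset.sum_mul_sum]; simp only [hR]; ring
      have hint : ∀ j k : ℕ, Integrable (fun ω => Z (j*Δ) ω * Z (k*Δ) ω) (ℙ : Measure Ω) :=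
        fun j k => (hL _ (hnn j)).integrable_mul (hL _ (hnn k))
      rw [e, integral_const_mul,
        integral_finsetSum _ (fun j _ => integrable_finsetSum _ fun k _ => hint j k)]
      congr 1
      refine Finset.sum_congr rfl fun j _ => ?_
      rw [integral_finsetSum _ (fun k _ => hint j k)]
      exact Finset.sum_congr rfl fun k _ => hZ.cov _ _ (hnn j) (hnn k)
    have hvle : (v:ℝ) ≤ (1/(n:ℝ))^2 * (K * (n/Δ)) := by
      rw [← hvar, hvar2]
      exact mul_le_mul_of_nonneg_left (ouC_sum_le hθ Δ hΔ hΔ1 n) (by positivity)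
    constructor
    · have : Integrable (fun x : ℝ => exp (σ * x)) (gaussianReal 0 v) :=
        integrable_exp_mul_gaussianReal σ
      rw [← hv] at this
      exact this.comp_measurable hRm
    · rw [mgf_gaussianReal hv]
      apply exp_le_exp.mpr
      rw [hσ, one_mul, hpow]
      have : (v:ℝ) * (n*Δ) ≤ K := by
        calc (v:ℝ) * (n*Δ) ≤ (1/(n:ℝ))^2 * (K * (n/Δ)) * (n*Δ) := by gcongr
          _ = K := by field_simp
      linarith
  exact ae_tendsto_of_mgf (ℙ : Measure Ω) (fun (n : ℕ) ω => (1/(n:ℝ)) *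
      ∑ k ∈ range n, Z (k * (n:ℝ)^(-l)) ω)
      (fun n => 1 * (n:ℝ)^((1-l)/2)) (exp (K/2)) 1 ((1-l)/2) one_pos (by linarith)
      (Eventually.of_forall fun n => le_rfl)
      (by filter_upwards [eventually_gt_atTop 0] with n hn using key n hn _ rfl)
      (by filter_upwards [eventually_gt_atTop 0] with n hn using key n hn _ (by ring))

/-- with mesh `Δₙ = n^{−λ}`, `1/2 < λ < 1`, Yule's discrete nonsense
correlation `ρ̃(n)` converges to `0` almost surely. -/
theorem stmt_17 (θ : ℝ) (hθ : 0 < θ) (l : ℝ) (hl1 : 1 / 2 < l) (hl2 : l < 1)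
    [IsProbabilityMeasure (ℙ : Measure Ω)]
    (X : Fin 2 → ℝ → Ω → ℝ) (hX : IsOUPair θ X) :
    ∀ᵐ ω ∂(ℙ : Measure Ω),
      Tendsto (fun n : ℕ => ouRhoTilde X n ((n : ℝ) ^ (-l)) ω) atTop (𝓝 0) := by
  have hs2 : (1/√2 : ℝ)^2 = 1/2 := by
    rw [div_pow, Real.sq_sqrt (by norm_num)]; norm_num
  have o0 := hX.combo 1 0 (by norm_num)
  have o1 := hX.combo 0 1 (by norm_num)
  have op := hX.combo (1/√2) (1/√2) (by rw [hs2]; norm_num)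
  have om := hX.combo (1/√2) (-(1/√2)) (by rw [neg_sq, hs2]; norm_num)
  filter_upwards [o0.tendsto_Q hθ hl1 hl2, o1.tendsto_Q hθ hl1 hl2, op.tendsto_Q hθ hl1 hl2,
    om.tendsto_Q hθ hl1 hl2, o0.tendsto_S hθ hl1 hl2, o1.tendsto_S hθ hl1 hl2]
    with ω q0 q1 qp qm s0 s1
  simp only [one_mul, zero_mul, add_zero, zero_add] at q0 q1 s0 s1
  have q01 : Tendsto (fun n : ℕ => (1/(n:ℝ)) * ∑ k ∈ Finset.range n,
      X 0 (k * (n:ℝ)^(-l)) ω * X 1 (k * (n:ℝ)^(-l)) ω) atTop (𝓝 0) := by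
    have := (qp.sub qm).const_mul (1/2)
    rw [sub_self, mul_zero] at this
    refine this.congr fun n => ?_
    rw [← mul_sub, ← Finset.sum_sub_distrib, mul_left_comm, Finset.mul_sum]
    congr 1
    refine Finset.sum_congr rfl fun k _ => ?_
    linear_combination (2 * X 0 (k * (n:ℝ)^(-l)) ω * X 1 (k * (n:ℝ)^(-l)) ω) * hs2
  have y01 := q01.sub (s0.mul s1)
  have y00 := q0.sub (s0.mul s0)
  have y11 := q1.sub (s1.mul s1)
  simp only [mul_zero, sub_zero] at y01 y00 y11
  have hlim := y01.div (y00.mul y11).sqrt (by positivity)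
  rw [zero_div] at hlim
  refine hlim.congr' ?_
  filter_upwards [eventually_gt_atTop 0] with n hn
  obtain ⟨hΔ, -, -, -⟩ := mesh_facts l hl1 hl2 n hn
  have hn0 : (0:ℝ) < n := by positivity
  have hY : ∀ i j, ouYtilde X i j n ((n:ℝ)^(-l)) ω = ((n:ℝ) * (n:ℝ)^(-l)) *
      ((1/(n:ℝ)) * ∑ k ∈ Finset.range n, X i (k * (n:ℝ)^(-l)) ω * X j (k * (n:ℝ)^(-l)) ω
        - ((1/(n:ℝ)) * ∑ k ∈ Finset.range n, X i (k * (n:ℝ)^(-l)) ω) *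
          ((1/(n:ℝ)) * ∑ k ∈ Finset.range n, X j (k * (n:ℝ)^(-l)) ω)) := by
    intro i j
    rw [ouYtilde, ouXtilde, ouXtilde]
    field_simp
  have hT : 0 < (n:ℝ) * (n:ℝ)^(-l) := by positivity
  rw [ouRhoTilde, hY, hY, hY]
  simp only [Pi.div_apply, sq]
  exact (scale_ratio _ _ _ _ hT).symm

end
end
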